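/- arXiv:math/0001111 — 2 statements merged into one kernel-verified Lean document; each statement's English description precedes it below -/
import Mathlib

section
/- Let n ≥ 1 and let H ∈ ℂ[x,y] be a polynomial of degree n+1 that is regular at infinity. If H has only one critical value, i.e. there exists γ ∈ ℂ such that H(x₀,y₀) = γ at every critical point (x₀,y₀) of H, then H has exactly one critical point: there is a unique (x₀,y₀) ∈ ℂ² with H_x(x₀,y₀) = H_y(x₀,y₀) = 0. -/
open MvPolynomial Finset

/-- A polynomial `H` of degree `n+1` is regular at infinity if its principal
homogeneous part `Ĥ` has an isolated critical point at the origin: `(0,0)` is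
the only common zero of `Ĥ_x` and `Ĥ_y` in `ℂ²`. -/
def RegularAtInfinity (n : ℕ) (H : MvPolynomial (Fin 2) ℂ) : Prop :=
  ∀ x y : ℂ,
    eval ![x, y] (pderiv 0 (homogeneousComponent (n + 1) H)) = 0 →
    eval ![x, y] (pderiv 1 (homogeneousComponent (n + 1) H)) = 0 →
    x = 0 ∧ y = 0

/-- growth of polynomials -/
lemma poly_bound {σ : Type*} [Fintype σ] (f : MvPolynomial σ ℂ) (d : ℕ) (hf : f.totalDegree ≤ d) :
    ∃ C : ℝ, 0 ≤ C ∧ ∀ z : σ → ℂ, ‖eval z f‖ ≤ C * (max 1 ‖z‖) ^ d := by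
  refine ⟨∑ m ∈ f.support, ‖coeff m f‖, by positivity, fun z => ?_⟩
  rw [eval_eq, Finset.sum_mul]
  refine (norm_sum_le _ _).trans (Finset.sum_le_sum fun m hm => ?_)
  rw [norm_mul]
  gcongr
  rw [norm_prod]
  calc ∏ i ∈ m.support, ‖z i ^ m i‖ ≤ ∏ i ∈ m.support, (max 1 ‖z‖) ^ m i := by
        gcongr with i hi
        rw [norm_pow]
        gcongr
        exact (norm_le_pi_norm z i).trans (le_max_right _ _)
    _ = (max 1 ‖z‖) ^ (∑ i ∈ m.support, m i) := by rw [Finset.prod_pow_eq_pow_sum]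
    _ ≤ _ := by
        gcongr
        · exact le_max_left _ _
        · exact (le_totalDegree hm).trans hf

lemma hc_mul {σ : Type*} (g h : MvPolynomial σ ℂ) (n d : ℕ) (hh : h.IsHomogeneous n) (hd : n ≤ d) :
    homogeneousComponent d (g * h) = homogeneousComponent (d - n) g * h := by
  conv_lhs => rw [← sum_homogeneousComponent g, Finset.sum_mul, map_sum]
  have : ∀ i ∈ Finset.range (g.totalDegree + 1), homogeneousComponent d (homogeneousComponent i g * h)
      = if i = d - n then homogeneousComponent (d - n) g * h else 0 := by
    intro i hi
    rw [homogeneousComponent_of_mem (((homogeneousComponent_isHomogeneous i g).mul hh))]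
    by_cases h1 : i = d - n
    · subst h1
      simp [hd]
    · have : ¬ (d = i + n) := by omega
      simp [h1, this]
  rw [Finset.sum_congr rfl this, Finset.sum_ite_eq']
  split_ifs with h1
  · rfl
  · rw [homogeneousComponent_eq_zero, zero_mul]
    simp at h1; omega

lemma totalDegree_sub_hc {σ : Type*} (f : MvPolynomial σ ℂ) (d : ℕ) (hf : f.totalDegree ≤ d + 1) :
    (f - homogeneousComponent (d + 1) f).totalDegree ≤ d := by
  rw [totalDegree]
  refine Finset.sup_le fun s hs => ?_
  rw [mem_support_iff, coeff_sub, coeff_homogeneousComponent] at hs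
  have h1 : s.degree ≠ d + 1 := by
    intro h; simp [h] at hs
  rw [if_neg h1, sub_zero] at hs
  have h2 := (le_totalDegree (mem_support_iff.mpr hs)).trans hf
  rw [Finsupp.degree] at h1
  change s.sum (fun _ e => e) ≠ d + 1 at h1
  omega

/-- The leading forms of `U` generate everything in large degree. -/
lemma key_degree (n : ℕ) (U : Bool → MvPolynomial (Fin 2) ℂ)
    (hz : ∀ z : Fin 2 → ℂ, (∀ b, eval z (homogeneousComponent n (U b)) = 0) → z = 0) :
    ∃ M, n ≤ M ∧ ∀ d, M ≤ d → ∀ f : MvPolynomial (Fin 2) ℂ, f.IsHomogeneous d →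
      ∃ g : Bool → MvPolynomial (Fin 2) ℂ, (∀ b, (g b).IsHomogeneous (d - n)) ∧
        f = ∑ b, g b * homogeneousComponent n (U b) := by
  set I : Ideal (MvPolynomial (Fin 2) ℂ) :=
    Ideal.span (Set.range fun b => homogeneousComponent n (U b)) with hI
  have hX : ∀ i : Fin 2, X i ∈ I.radical := by
    intro i
    rw [← vanishingIdeal_zeroLocus_eq_radical (K := ℂ), mem_vanishingIdeal_iff]
    intro z hzz
    rw [mem_zeroLocus_iff] at hzz
    have : z = 0 := hz z fun b => by
      simpa [aeval_eq_eval] using hzz _ (Ideal.subset_span ⟨b, rfl⟩)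
    simp [this]
  choose m hm using fun i => Ideal.mem_radical_iff.mp (hX i)
  refine ⟨m 0 + m 1 + n, by omega, fun d hd f hf => ?_⟩
  have hfI : f ∈ I := by
    rw [f.as_sum]
    refine Ideal.sum_mem _ fun s hs => ?_
    have hs2 : s 0 + s 1 = d := by
      have := hf.degree_eq_sum_deg_support hs
      rw [this, ← Fin.sum_univ_two (fun i => s i)]
      exact (Finsupp.degree_eq_sum s).symm
    have key : ∀ i, m i ≤ s i → monomial s (coeff s f) ∈ I := by
      intro i hi
      have : monomial s (coeff s f) = monomial (s - Finsupp.single i (m i)) (coeff s f) * X i ^ m i := by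
        rw [X_pow_eq_monomial, monomial_mul, mul_one, tsub_add_cancel_of_le]
        simpa using hi
      rw [this]
      exact Ideal.mul_mem_left _ _ (hm i)
    rcases le_or_gt (m 0) (s 0) with h0 | h0
    · exact key 0 h0
    · exact key 1 (by omega)
  obtain ⟨c, hc⟩ := (Ideal.mem_span_range_iff_exists_fun).mp hfI
  refine ⟨fun b => homogeneousComponent (d - n) (c b),
    fun b => homogeneousComponent_isHomogeneous _ _, ?_⟩
  rw [← homogeneousComponent_eq_self hf, ← hc, map_sum]
  refine Finset.sum_congr rfl fun b _ => ?_
  rw [hc_mul _ _ n d (homogeneousComponent_isHomogeneous _ _) (by omega)]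

lemma key_degree2 (n : ℕ) (hn : 1 ≤ n) (U : Bool → MvPolynomial (Fin 2) ℂ)
    (hU : ∀ b, (U b).totalDegree ≤ n)
    (hz : ∀ z : Fin 2 → ℂ, (∀ b, eval z (homogeneousComponent n (U b)) = 0) → z = 0) :
    ∃ M, n ≤ M ∧ ∀ d, M ≤ d → ∀ f : MvPolynomial (Fin 2) ℂ, f.totalDegree ≤ d →
      ∃ (g : Bool → MvPolynomial (Fin 2) ℂ) (r : MvPolynomial (Fin 2) ℂ),
        (∀ b, (g b).totalDegree ≤ d - n) ∧ r.totalDegree ≤ d - 1 ∧ f = ∑ b, g b * U b + r := by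
  obtain ⟨M, hM, h⟩ := key_degree n U hz
  refine ⟨M, hM, fun d hd f hf => ?_⟩
  obtain ⟨g, hg, hfg⟩ := h d hd _ (homogeneousComponent_isHomogeneous d f)
  refine ⟨g, (f - homogeneousComponent d f) - ∑ b, g b * (U b - homogeneousComponent n (U b)),
    fun b => (hg b).totalDegree_le, ?_, ?_⟩
  · refine (totalDegree_sub _ _).trans (max_le ?_ ?_)
    · obtain ⟨e, rfl⟩ : ∃ e, d = e + 1 := ⟨d - 1, by omega⟩
      exact totalDegree_sub_hc f e hf
    · refine totalDegree_finsetSum_le fun b _ => ?_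
      refine (totalDegree_mul _ _).trans ?_
      have h1 := (hg b).totalDegree_le
      obtain ⟨e, rfl⟩ : ∃ e, n = e + 1 := ⟨n - 1, by omega⟩
      have h2 := totalDegree_sub_hc (U b) e (hU b)
      omega
  · simp only [mul_sub, Finset.sum_sub_distrib, ← hfg]
    ring

/-- properness -/
lemma proper_bound (n : ℕ) (hn : 1 ≤ n) (U : Bool → MvPolynomial (Fin 2) ℂ)
    (hU : ∀ b, (U b).totalDegree ≤ n)
    (hz : ∀ z : Fin 2 → ℂ, (∀ b, eval z (homogeneousComponent n (U b)) = 0) → z = 0) :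
    ∃ C : ℝ, 0 < C ∧ ∀ z : Fin 2 → ℂ, (max 1 ‖z‖) ^ n ≤ C * (1 + ‖fun b => eval z (U b)‖) := by
  obtain ⟨M, hM, h⟩ := key_degree2 n hn U hU hz
  have h1 : ∀ i : Fin 2, ∃ C : ℝ, 0 < C ∧ ∀ z : Fin 2 → ℂ, ‖z‖ ≤ ‖z i‖ → 1 ≤ ‖z‖ →
      ‖z‖ ^ n ≤ C * (1 + ‖fun b => eval z (U b)‖) := by
    intro i
    obtain ⟨g, r, hg, hr, hf⟩ := h M le_rfl (X i ^ M) (by simp)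
    choose Cg hCg0 hCg using fun b => poly_bound (g b) _ (hg b)
    obtain ⟨Cr, hCr0, hCr⟩ := poly_bound r _ hr
    set S := ∑ b, Cg b with hS
    have hS0 : 0 ≤ S := Finset.sum_nonneg fun b _ => hCg0 b
    refine ⟨2 * (S + 1) + (2 * Cr + 1) ^ n, by positivity, fun z hzi hz1 => ?_⟩
    set m := ‖fun b => eval z (U b)‖ with hm
    have hm0 : 0 ≤ m := norm_nonneg _
    rcases le_or_gt (‖z‖) (2 * Cr + 1) with hle | hgt
    · calc ‖z‖ ^ n ≤ (2 * Cr + 1) ^ n := by gcongr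
        _ ≤ 2 * (S + 1) + (2 * Cr + 1) ^ n := by linarith
        _ ≤ _ := le_mul_of_one_le_right (by positivity) (by linarith)
    · have e1 : z i ^ M = ∑ b, eval z (g b) * eval z (U b) + eval z r := by
        have := congrArg (eval z) hf
        simpa using this
      have hmax : max 1 ‖z‖ = ‖z‖ := max_eq_right hz1
      have e2 : ‖z‖ ^ M ≤ S * ‖z‖ ^ (M - n) * m + Cr * ‖z‖ ^ (M - 1) := by
        calc ‖z‖ ^ M ≤ ‖z i‖ ^ M := by gcongr
          _ = ‖∑ b, eval z (g b) * eval z (U b) + eval z r‖ := by rw [← norm_pow, e1]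
          _ ≤ ∑ b, ‖eval z (g b) * eval z (U b)‖ + ‖eval z r‖ :=
              (norm_add_le _ _).trans (by gcongr; exact norm_sum_le _ _)
          _ ≤ ∑ b, Cg b * ‖z‖ ^ (M - n) * m + Cr * ‖z‖ ^ (M - 1) := by
              gcongr with b
              · rw [norm_mul]
                refine mul_le_mul ?_ ?_ (norm_nonneg _)
                  (mul_nonneg (hCg0 b) (pow_nonneg (norm_nonneg _) _))
                · simpa [hmax] using hCg b z
                · exact norm_le_pi_norm (fun b => eval z (U b)) b
              · simpa [hmax] using hCr z
          _ = _ := by rw [hS, Finset.sum_mul, Finset.sum_mul]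
      have e3 : Cr * ‖z‖ ^ (M - 1) ≤ ‖z‖ ^ M / 2 := by
        obtain ⟨e, rfl⟩ : ∃ e, M = e + 1 := ⟨M - 1, by omega⟩
        simp only [Nat.add_sub_cancel, pow_succ]
        nlinarith [pow_pos (lt_of_lt_of_le one_pos hz1) e]
      have e4 : ‖z‖ ^ M = ‖z‖ ^ (M - n) * ‖z‖ ^ n := by rw [← pow_add]; congr 1; omega
      have e5 : ‖z‖ ^ (M - n) * ‖z‖ ^ n ≤ ‖z‖ ^ (M - n) * (2 * S * m) := by
        rw [← e4]; nlinarith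
      have e6 := le_of_mul_le_mul_left e5 (pow_pos (lt_of_lt_of_le one_pos hz1) _)
      have : 0 ≤ (2 * Cr + 1) ^ n := by positivity
      nlinarith
  choose C hC0 hC using h1
  refine ⟨C 0 + C 1 + 1, by linarith [hC0 0, hC0 1], fun z => ?_⟩
  have hm0 : 0 ≤ ‖fun b => eval z (U b)‖ := norm_nonneg _
  rcases le_total ‖z‖ 1 with h | h
  · rw [max_eq_left h, one_pow]
    nlinarith [hC0 0, hC0 1]
  · rw [max_eq_right h]
    have : ‖z‖ ≤ ‖z 0‖ ∨ ‖z‖ ≤ ‖z 1‖ := by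
      by_contra! hcon
      have : ‖z‖ < ‖z‖ := by
        refine (pi_norm_lt_iff (lt_of_lt_of_le one_pos h)).mpr fun i => ?_
        fin_cases i
        · exact hcon.1
        · exact hcon.2
      exact lt_irrefl _ this
    rcases this with h2 | h2
    · refine (hC 0 z h2 h).trans ?_
      gcongr
      linarith [hC0 1]
    · refine (hC 1 z h2 h).trans ?_
      gcongr
      linarith [hC0 0]

lemma integral_aeval (n : ℕ) (hn : 1 ≤ n) (U : Bool → MvPolynomial (Fin 2) ℂ)
    (hU : ∀ b, (U b).totalDegree ≤ n)
    (hz : ∀ z : Fin 2 → ℂ, (∀ b, eval z (homogeneousComponent n (U b)) = 0) → z = 0) :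
    Algebra.IsIntegral (Algebra.adjoin ℂ (Set.range U)) (MvPolynomial (Fin 2) ℂ) := by
  obtain ⟨M, hM, h⟩ := key_degree2 n hn U hU hz
  set A := Algebra.adjoin ℂ (Set.range U) with hA
  set S : Submodule A (MvPolynomial (Fin 2) ℂ) := Submodule.span A
    (((Finset.range (M + 1) ×ˢ Finset.range (M + 1)).image
      fun p => (X 0 ^ p.1 * X 1 ^ p.2 : MvPolynomial (Fin 2) ℂ) : Finset _) : Set _) with hS
  have hUA : ∀ b, U b ∈ A := fun b => Algebra.subset_adjoin ⟨b, rfl⟩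
  have main : ∀ d, ∀ f : MvPolynomial (Fin 2) ℂ, f.totalDegree ≤ d → f ∈ S := by
    intro d
    induction d using Nat.strong_induction_on with
    | _ d ih =>
      intro f hf
      rcases le_or_gt d M with hd | hd
      · rw [f.as_sum]
        refine Submodule.sum_mem _ fun s hs => ?_
        have h1 := (le_totalDegree hs).trans hf
        have h2 : s 0 + s 1 ≤ d := by
          rw [← Fin.sum_univ_two (fun i => s i)]
          rwa [Finsupp.sum_fintype _ _ (by simp)] at h1
        have h3 : monomial s (coeff s f) = (algebraMap ℂ A (coeff s f)) •
            (X 0 ^ s 0 * X 1 ^ s 1 : MvPolynomial (Fin 2) ℂ) := by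
          rw [monomial_eq, Finsupp.prod_fintype _ _ (by simp), Fin.prod_univ_two,
            algebraMap_smul, smul_eq_C_mul]
        rw [h3]
        refine Submodule.smul_mem _ _ (Submodule.subset_span ?_)
        simp only [coe_image, coe_product, coe_range]
        exact ⟨(s 0, s 1), ⟨by simp; omega, by simp; omega⟩, rfl⟩
      · obtain ⟨g, r, hg, hr, hfg⟩ := h d hd.le f hf
        rw [hfg]
        refine Submodule.add_mem _ (Submodule.sum_mem _ fun b _ => ?_) (ih _ (by omega) _ hr)
        have : g b * U b = (⟨U b, hUA b⟩ : A) • g b := by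
          rw [Subalgebra.smul_def, smul_eq_mul, mul_comm]
        rw [this]
        exact Submodule.smul_mem _ _ (ih _ (by omega) _ (hg b))
  have : Module.Finite A (MvPolynomial (Fin 2) ℂ) :=
    ⟨⟨_, eq_top_iff.mpr fun f _ => main _ f le_rfl⟩⟩
  infer_instance

lemma algIndep (U : Bool → MvPolynomial (Fin 2) ℂ)
    (hi : Algebra.IsIntegral (Algebra.adjoin ℂ (Set.range U)) (MvPolynomial (Fin 2) ℂ)) :
    AlgebraicIndependent ℂ U := by
  have := Algebra.IsAlgebraic.isTranscendenceBasis_of_le_trdeg_of_finite ℂ U (by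
    rw [MvPolynomial.trdeg_of_isDomain]; simp)
  exact this.1

lemma minpoly_package (U : Bool → MvPolynomial (Fin 2) ℂ)
    (hi : Algebra.IsIntegral (Algebra.adjoin ℂ (Set.range U)) (MvPolynomial (Fin 2) ℂ))
    (K : MvPolynomial (Fin 2) ℂ) :
    ∃ P : Polynomial (MvPolynomial Bool ℂ), P.Monic ∧
      P.eval₂ (aeval U : MvPolynomial Bool ℂ →ₐ[ℂ] MvPolynomial (Fin 2) ℂ).toRingHom K = 0 ∧
      (∀ Q : Polynomial (MvPolynomial Bool ℂ),
        Q.eval₂ (aeval U : MvPolynomial Bool ℂ →ₐ[ℂ] MvPolynomial (Fin 2) ℂ).toRingHom K = 0 → P ∣ Q) ∧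
      ∀ (w : Bool → ℂ) (t : ℂ), (P.map (eval w)).IsRoot t →
        ∃ z : Fin 2 → ℂ, (∀ b, eval z (U b) = w b) ∧ eval z K = t := by
  have hind := algIndep U hi
  let alg : Algebra (MvPolynomial Bool ℂ) (MvPolynomial (Fin 2) ℂ) :=
    (aeval U : MvPolynomial Bool ℂ →ₐ[ℂ] MvPolynomial (Fin 2) ℂ).toRingHom.toAlgebra
  have hmap : ∀ a, algebraMap (MvPolynomial Bool ℂ) (MvPolynomial (Fin 2) ℂ) a = aeval U a :=
    fun a => rfl
  have hinj : Function.Injective (algebraMap (MvPolynomial Bool ℂ) (MvPolynomial (Fin 2) ℂ)) := hind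
  have : FaithfulSMul (MvPolynomial Bool ℂ) (MvPolynomial (Fin 2) ℂ) :=
    (faithfulSMul_iff_algebraMap_injective _ _).mpr hinj
  have : Module.IsTorsionFree (MvPolynomial Bool ℂ) (MvPolynomial (Fin 2) ℂ) := inferInstance
  have hint : Algebra.IsIntegral (MvPolynomial Bool ℂ) (MvPolynomial (Fin 2) ℂ) := by
    let g : MvPolynomial Bool ℂ →ₐ[ℂ] Algebra.adjoin ℂ (Set.range U) :=
      aeval fun b => ⟨U b, Algebra.subset_adjoin ⟨b, rfl⟩⟩
    have hcomp : (Subalgebra.val _).comp g = aeval U := by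
      ext b; simp [g]
    have hgs : Function.Surjective g := by
      rintro ⟨a, ha⟩
      have ha' := ha
      rw [Algebra.adjoin_range_eq_range_aeval] at ha'
      obtain ⟨c, hc⟩ := ha'
      exact ⟨c, Subtype.ext ((DFunLike.congr_fun hcomp c).trans hc)⟩
    have h1 : g.toRingHom.IsIntegral := RingHom.isIntegral_of_surjective _ hgs
    have h2 := RingHom.IsIntegral.trans _ _ h1 (algebraMap_isIntegral_iff.mpr hi)
    rw [← algebraMap_isIntegral_iff]
    have h3 : algebraMap (MvPolynomial Bool ℂ) (MvPolynomial (Fin 2) ℂ) =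
        (algebraMap (Algebra.adjoin ℂ (Set.range U)) (MvPolynomial (Fin 2) ℂ)).comp g.toRingHom :=
      RingHom.ext fun a => (DFunLike.congr_fun hcomp a).symm
    rw [h3]
    exact h2
  have hK : IsIntegral (MvPolynomial Bool ℂ) K := hint.isIntegral K
  refine ⟨minpoly _ K, minpoly.monic hK, minpoly.aeval _ K,
    fun Q hQ => minpoly.isIntegrallyClosed_dvd hK hQ, fun w t ht => ?_⟩
  let S := Algebra.adjoin (MvPolynomial Bool ℂ) {K}
  have ht' : (minpoly (MvPolynomial Bool ℂ) K).eval₂ (eval w) t = 0 := by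
    rwa [Polynomial.IsRoot, Polynomial.eval_map] at ht
  let ψ : S →+* ℂ := (AdjoinRoot.lift (eval w) t ht').comp
    (minpoly.equivAdjoin hK).symm.toRingEquiv.toRingHom
  have hψa : ∀ a, ψ (algebraMap _ S a) = eval w a := by
    intro a
    have h1 : (minpoly.equivAdjoin hK).symm (algebraMap _ S a) = AdjoinRoot.of _ a :=
      (minpoly.equivAdjoin hK).symm.commutes a
    change AdjoinRoot.lift (eval w) t ht' ((minpoly.equivAdjoin hK).symm (algebraMap _ S a)) = _
    rw [h1, AdjoinRoot.lift_of]
  have hψK : ψ ⟨K, Algebra.subset_adjoin rfl⟩ = t := by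
    have h1 : (minpoly.equivAdjoin hK).symm ⟨K, Algebra.subset_adjoin rfl⟩ = AdjoinRoot.root _ := by
      rw [AlgEquiv.symm_apply_eq]
      apply Subtype.ext
      rw [minpoly.coe_equivAdjoin]
      simp
    change AdjoinRoot.lift (eval w) t ht' ((minpoly.equivAdjoin hK).symm _) = _
    rw [h1, AdjoinRoot.lift_root]
  have hsurj : Function.Surjective ψ := fun c => ⟨algebraMap _ S (C c), by rw [hψa]; simp⟩
  have hmax : (RingHom.ker ψ).IsMaximal := RingHom.ker_isMaximal_of_surjective ψ hsurj
  have : Algebra.IsIntegral S (MvPolynomial (Fin 2) ℂ) := Algebra.IsIntegral.tower_top (MvPolynomial Bool ℂ)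
  obtain ⟨Q, hQ, hQc⟩ := Ideal.exists_ideal_over_maximal_of_isIntegral (S := MvPolynomial (Fin 2) ℂ)
    (RingHom.ker ψ) (by
      rw [(RingHom.injective_iff_ker_eq_bot _).mp]
      · exact bot_le
      · exact Subtype.val_injective)
  obtain ⟨z, hz⟩ := isMaximal_iff_eq_vanishingIdeal_singleton.mp hQ
  have key : ∀ s : S, ψ s = 0 → eval z (s : MvPolynomial (Fin 2) ℂ) = 0 := by
    intro s hs
    have : s ∈ Q.comap (algebraMap S (MvPolynomial (Fin 2) ℂ)) := by rw [hQc]; exact hs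
    rw [Ideal.mem_comap, hz, mem_vanishingIdeal_singleton_iff] at this
    simpa [aeval_eq_eval] using this
  refine ⟨z, fun b => ?_, ?_⟩
  · have := key (algebraMap _ S (X b - C (w b))) (by rw [hψa]; simp)
    have h2 : ((algebraMap _ S (X b - C (w b)) : S) : MvPolynomial (Fin 2) ℂ) = U b - C (w b) := by
      change aeval U (X b - C (w b)) = _
      simp [MvPolynomial.algebraMap_eq]
    rw [h2] at this
    simpa [sub_eq_zero] using this
  · have := key (⟨K, Algebra.subset_adjoin rfl⟩ - algebraMap (MvPolynomial Bool ℂ) S (C t)) (by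
      rw [map_sub, hψK, hψa]; simp)
    have h2 : (((⟨K, Algebra.subset_adjoin rfl⟩ : S) - algebraMap (MvPolynomial Bool ℂ) S (C t) : S) : MvPolynomial (Fin 2) ℂ) = K - C t := by
      rw [AddSubgroupClass.coe_sub]
      congr 1
      change aeval U (C t) = _
      simp [MvPolynomial.algebraMap_eq]
    rw [h2] at this
    simpa [sub_eq_zero] using this

lemma poly_one_bound (C : ℝ) (i : ℕ) : ∀ q : Polynomial ℂ, (∀ t : ℂ, ‖q.eval t‖ ≤ C * ‖t‖ ^ i) →
    ∀ j, j ≠ i → q.coeff j = 0 := by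
  induction i with
  | zero =>
    intro q hq j hj
    have hb : Bornology.IsBounded (Set.range fun t => q.eval t) := by
      rw [isBounded_iff_forall_norm_le]
      refine ⟨C, ?_⟩
      rintro _ ⟨t, rfl⟩
      simpa using hq t
    have hc : q = Polynomial.C (q.eval 0) := by
      apply Polynomial.funext
      intro t
      rw [Polynomial.eval_C]
      exact Differentiable.apply_eq_apply_of_bounded (f := fun t => q.eval t) q.differentiable hb t 0
    rw [hc, Polynomial.coeff_C, if_neg hj]
  | succ i ih =>
    intro q hq j hj
    have h0 : q.coeff 0 = 0 := by
      have := hq 0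
      rw [← Polynomial.coeff_zero_eq_eval_zero] at this
      simpa using this
    obtain ⟨r, rfl⟩ := Polynomial.X_dvd_iff.mpr h0
    rcases j with _ | j
    · exact h0
    rw [Polynomial.coeff_X_mul]
    refine ih r ?_ j (by omega)
    have h1 : ∀ t : ℂ, t ≠ 0 → ‖r.eval t‖ ≤ C * ‖t‖ ^ i := by
      intro t ht
      have h2 := hq t
      rw [Polynomial.eval_mul, Polynomial.eval_X, norm_mul, pow_succ] at h2
      have h3 : 0 < ‖t‖ := norm_pos_iff.mpr ht
      refine le_of_mul_le_mul_left ?_ h3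
      linarith
    have hcl : IsClosed {t : ℂ | ‖r.eval t‖ ≤ C * ‖t‖ ^ i} :=
      isClosed_le (r.continuous.norm) (by fun_prop)
    have hd : Dense ({0}ᶜ : Set ℂ) := dense_compl_singleton 0
    intro t
    have : closure ({0}ᶜ : Set ℂ) ⊆ {t : ℂ | ‖r.eval t‖ ≤ C * ‖t‖ ^ i} :=
      closure_minimal (fun t ht => h1 t ht) hcl
    exact this (hd t)

lemma eval_smul_homog {σ : Type*} (f : MvPolynomial σ ℂ) (n : ℕ) (hf : f.IsHomogeneous n) (t : ℂ)
    (w : σ → ℂ) : eval (t • w) f = t ^ n * eval w f := by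
  rw [eval_eq, eval_eq, Finset.mul_sum]
  refine Finset.sum_congr rfl fun s hs => ?_
  simp only [Pi.smul_apply, smul_eq_mul, mul_pow, Finset.prod_mul_distrib, Finset.prod_pow_eq_pow_sum]
  rw [← hf.degree_eq_sum_deg_support hs]
  ring

lemma homog_of_bound {σ : Type*} [Fintype σ] (f : MvPolynomial σ ℂ) (C : ℝ) (n : ℕ)
    (h : ∀ w : σ → ℂ, ‖eval w f‖ ≤ C * ‖w‖ ^ n) : f.IsHomogeneous n := by
  have key : ∀ j, j ≠ n → homogeneousComponent j f = 0 := by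
    intro j hj
    by_cases hjd : f.totalDegree < j
    · exact homogeneousComponent_eq_zero _ _ hjd
    apply MvPolynomial.funext
    intro w
    rw [map_zero]
    set q : Polynomial ℂ := ∑ k ∈ Finset.range (f.totalDegree + 1),
      Polynomial.monomial k (eval w (homogeneousComponent k f)) with hq
    have hqe : ∀ t, q.eval t = eval (t • w) f := by
      intro t
      conv_rhs => rw [← sum_homogeneousComponent f, map_sum]
      rw [hq, Polynomial.eval_finsetSum]
      refine Finset.sum_congr rfl fun k _ => ?_
      rw [eval_smul_homog _ k (homogeneousComponent_isHomogeneous _ _), Polynomial.eval_monomial,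
        mul_comm]
    have := poly_one_bound (C * ‖w‖ ^ n) n q (fun t => by
      rw [hqe]
      refine (h _).trans (le_of_eq ?_)
      rw [norm_smul, mul_pow]; ring) j hj
    rw [hq, Polynomial.finsetSum_coeff] at this
    simp only [Polynomial.coeff_monomial] at this
    rw [Finset.sum_ite_eq' , if_pos (by simp; omega)] at this
    exact this
  rw [← sum_homogeneousComponent f]
  refine IsHomogeneous.sum _ _ _ fun j _ => ?_
  by_cases hj : j = n
  · subst hj; exact homogeneousComponent_isHomogeneous _ _
  · rw [key j hj]; exact isHomogeneous_zero _ _ _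

lemma deriv_eval₂ {A B : Type*} [CommRing A] [CommRing B] [Algebra ℂ B] (φ : A →+* B) (K : B)
    (D : Derivation ℂ B B) (P : Polynomial A) :
    D (P.eval₂ φ K) = ∑ i ∈ Finset.range (P.natDegree + 1), D (φ (P.coeff i)) * K ^ i +
      P.derivative.eval₂ φ K * D K := by
  have h : ∀ P : Polynomial A, D (P.eval₂ φ K) = P.sum (fun i a => D (φ a) * K ^ i) +
      P.derivative.eval₂ φ K * D K := by
    intro P
    induction P using Polynomial.induction_on' with
    | add p q hp hq =>
      rw [Polynomial.eval₂_add, map_add, hp, hq, Polynomial.sum_add_index, Polynomial.derivative_add,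
        Polynomial.eval₂_add]
      · ring
      · simp
      · intro i a b; simp [add_mul]
    | monomial i a =>
      rw [Polynomial.sum_monomial_index _ _ (by simp), Polynomial.derivative_monomial,
        Polynomial.eval₂_monomial, Polynomial.eval₂_monomial, Derivation.leibniz, Derivation.leibniz_pow]
      simp only [smul_eq_mul, nsmul_eq_mul, map_mul, map_natCast]
      ring
  rw [h, Polynomial.sum_over_range _ (by simp)]

lemma deriv_ne_zero_aux {A B : Type*} [CommRing A] [IsDomain A] [CharZero A] [CommRing B] [Nontrivial B]
    (P : Polynomial A) (hP : P.Monic) (φ : A →+* B) (K : B) (hPK : P.eval₂ φ K = 0)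
    (hdvd : ∀ Q : Polynomial A, Q.eval₂ φ K = 0 → P ∣ Q) : P.derivative.eval₂ φ K ≠ 0 := by
  intro h
  have h1 := hdvd _ h
  by_cases hN0 : P.natDegree = 0
  · have := hP.natDegree_eq_zero.mp hN0
    rw [this] at hPK; simp at hPK
  · have h2 : P.derivative ≠ 0 := by
      intro h3
      exact hN0 (Polynomial.derivative_eq_zero.mp h3)
    have h3 := Polynomial.natDegree_le_of_dvd h1 h2
    have h4 := Polynomial.natDegree_derivative_lt (p := P) hN0
    omega

lemma deriv_kill (U : Bool → MvPolynomial (Fin 2) ℂ)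
    (hi : Algebra.IsIntegral (Algebra.adjoin ℂ (Set.range U)) (MvPolynomial (Fin 2) ℂ))
    (K : MvPolynomial (Fin 2) ℂ)
    (D : Derivation ℂ (MvPolynomial (Fin 2) ℂ) (MvPolynomial (Fin 2) ℂ))
    (hD : ∀ b, D (U b) = 0) : D K = 0 := by
  obtain ⟨P, hP, hPK, hdvd, hroot⟩ := minpoly_package U hi K
  set φ := (aeval U : MvPolynomial Bool ℂ →ₐ[ℂ] MvPolynomial (Fin 2) ℂ).toRingHom with hφ
  have h1 : ∀ c : MvPolynomial Bool ℂ, D (φ c) = 0 := by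
    intro c
    induction c using MvPolynomial.induction_on with
    | C a => simp [hφ, MvPolynomial.algebraMap_eq]
    | add p q hp hq => simp only [map_add, hp, hq, add_zero]
    | mul_X p b hp =>
      have hX : φ (X b) = U b := by simp [hφ]
      rw [map_mul, Derivation.leibniz, hp, hX, hD]
      simp
  have e := deriv_eval₂ φ K D P
  rw [hPK, map_zero, Finset.sum_eq_zero (fun i _ => by rw [h1, zero_mul]), zero_add] at e
  rcases mul_eq_zero.mp e.symm with h | h
  · exact absurd h (deriv_ne_zero_aux P hP φ K hPK hdvd)
  · exact h

/-- derivations kill/scale: if `D (U b) = Δ * U b` and `|K| ≤ C |U|` then `D K = Δ * K`. -/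
lemma deriv_scale (U : Bool → MvPolynomial (Fin 2) ℂ)
    (hi : Algebra.IsIntegral (Algebra.adjoin ℂ (Set.range U)) (MvPolynomial (Fin 2) ℂ))
    (K Δ : MvPolynomial (Fin 2) ℂ) (C : ℝ)
    (hK : ∀ z : Fin 2 → ℂ, ‖eval z K‖ ≤ C * ‖fun b => eval z (U b)‖)
    (D : Derivation ℂ (MvPolynomial (Fin 2) ℂ) (MvPolynomial (Fin 2) ℂ))
    (hD : ∀ b, D (U b) = Δ * U b) : D K = Δ * K := by
  obtain ⟨P, hP, hPK, hdvd, hroot⟩ := minpoly_package U hi K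
  set φ := (aeval U : MvPolynomial Bool ℂ →ₐ[ℂ] MvPolynomial (Fin 2) ℂ).toRingHom with hφ
  set N := P.natDegree with hN
  have hhom : ∀ i, (P.coeff i).IsHomogeneous (N - i) := by
    intro i
    refine homog_of_bound _ (C ^ (N - i) * N.choose i) _ fun w => ?_
    have h1 := Polynomial.coeff_le_of_roots_le (p := P.map (eval w)) (f := RingHom.id ℂ)
      (B := C * ‖w‖) i (hP.map _) (IsAlgClosed.splits _) (by
        intro t ht
        rw [Polynomial.map_id, Polynomial.mem_roots (hP.map _).ne_zero] at ht
        obtain ⟨z, hz, rfl⟩ := hroot w t ht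
        have := hK z
        simpa [hz] using this)
    rw [Polynomial.map_id, Polynomial.coeff_map, hP.natDegree_map] at h1
    refine h1.trans (le_of_eq ?_)
    rw [mul_pow]; ring
  have hDc : ∀ (c : MvPolynomial Bool ℂ) (d : ℕ), c.IsHomogeneous d → D (φ c) = d * (Δ * φ c) := by
    intro c d hc
    have h1 : ∀ c : MvPolynomial Bool ℂ, D (φ c) = Δ * φ (∑ b, X b * pderiv b c) := by
      intro c
      induction c using MvPolynomial.induction_on with
      | C a => simp [hφ, MvPolynomial.algebraMap_eq]
      | add p q hp hq =>
        simp only [map_add, hp, hq, mul_add, Finset.sum_add_distrib]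
      | mul_X p b hp =>
        have hX : φ (X b) = U b := by simp [hφ]
        rw [map_mul, Derivation.leibniz, hp, hX, hD]
        simp only [Derivation.leibniz, smul_eq_mul, mul_add, Finset.sum_add_distrib, map_add, pderiv_X]
        have : ∑ x, X x * (p * Pi.single (M := fun _ => MvPolynomial Bool ℂ) x 1 b) = X b * p := by
          cases b <;> simp
        have h3 : ∑ x, X x * (X b * (pderiv x) p) = X b * ∑ x, X x * pderiv x p := by
          rw [Finset.mul_sum]; exact Finset.sum_congr rfl fun x _ => by ring
        rw [this, h3, map_mul, map_mul, hX]
        ring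
    rw [h1, hc.sum_X_mul_pderiv]
    simp
    ring
  have e := deriv_eval₂ φ K D P
  have e2 : ∑ i ∈ Finset.range (P.natDegree + 1), D (φ (P.coeff i)) * K ^ i =
      N * Δ * P.eval₂ φ K - P.derivative.eval₂ φ K * (Δ * K) := by
    have h3 : P.derivative.eval₂ φ K * K =
        ∑ i ∈ Finset.range (P.natDegree + 1), i * (φ (P.coeff i) * K ^ i) := by
      have : ∀ Q : Polynomial (MvPolynomial Bool ℂ), Q.derivative.eval₂ φ K * K =
          Q.sum (fun i a => i * (φ a * K ^ i)) := by
        intro Q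
        induction Q using Polynomial.induction_on' with
        | add p q hp hq =>
          rw [Polynomial.derivative_add, Polynomial.eval₂_add, add_mul, hp, hq, Polynomial.sum_add_index]
          · simp
          · intro i a b; simp; ring
        | monomial i a =>
          rw [Polynomial.sum_monomial_index _ _ (by simp), Polynomial.derivative_monomial,
            Polynomial.eval₂_monomial]
          rcases i with _ | i
          · simp
          · simp; ring
      rw [this, Polynomial.sum_over_range _ (by simp)]
    rw [mul_comm Δ K, ← mul_assoc, h3, Polynomial.eval₂_eq_sum_range, Finset.mul_sum, Finset.sum_mul,
      ← Finset.sum_sub_distrib]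
    refine Finset.sum_congr rfl fun i hi => ?_
    have hiN : i ≤ N := by
      have := Finset.mem_range.mp hi
      omega
    rw [hDc _ _ (hhom i), Nat.cast_sub hiN]
    ring
  rw [e2, hPK, map_zero] at e
  have e3 : P.derivative.eval₂ φ K * (D K - Δ * K) = 0 := by
    rw [mul_sub]; linear_combination -e
  rcases mul_eq_zero.mp e3 with h | h
  · exact absurd h (deriv_ne_zero_aux P hP φ K hPK hdvd)
  · exact sub_eq_zero.mp h


lemma hasFDerivAt_eval (f : MvPolynomial (Fin 2) ℂ) (z : Fin 2 → ℂ) :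
    HasFDerivAt (fun z : Fin 2 → ℂ => eval z f)
      (eval z (pderiv 0 f) • (ContinuousLinearMap.proj 0 : (Fin 2 → ℂ) →L[ℂ] ℂ) +
        eval z (pderiv 1 f) • (ContinuousLinearMap.proj 1 : (Fin 2 → ℂ) →L[ℂ] ℂ)) z := by
  induction f using MvPolynomial.induction_on with
  | C a =>
    simp only [eval_C]
    refine (hasFDerivAt_const (𝕜 := ℂ) a z).congr_fderiv ?_
    apply ContinuousLinearMap.ext
    intro x
    simp
  | add p q hp hq =>
    simp only [map_add]
    refine (hp.add hq).congr_fderiv ?_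
    apply ContinuousLinearMap.ext
    intro x
    simp
    ring
  | mul_X p i hp =>
    simp only [map_mul, eval_X]
    have h1 : HasFDerivAt (fun z : Fin 2 → ℂ => z i)
      (ContinuousLinearMap.proj i : (Fin 2 → ℂ) →L[ℂ] ℂ) z :=
      (ContinuousLinearMap.proj i : (Fin 2 → ℂ) →L[ℂ] ℂ).hasFDerivAt
    refine (hp.mul h1).congr_fderiv ?_
    apply ContinuousLinearMap.ext
    intro x
    fin_cases i <;> simp [Derivation.leibniz, pderiv_X] <;> ring

lemma hasDerivAt_eval_comp (f : MvPolynomial (Fin 2) ℂ) (q : ℂ → Fin 2 → ℂ) (q' : Fin 2 → ℂ) (s : ℂ)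
    (hq : HasDerivAt q q' s) :
    HasDerivAt (fun s => eval (q s) f)
      (eval (q s) (pderiv 0 f) * q' 0 + eval (q s) (pderiv 1 f) * q' 1) s := by
  refine ((hasFDerivAt_eval f (q s)).comp_hasDerivAt s hq).congr_deriv ?_
  simp

lemma contDiff_eval (f : MvPolynomial (Fin 2) ℂ) : ContDiff ℂ 1 (fun z : Fin 2 → ℂ => eval z f) := by
  induction f using MvPolynomial.induction_on with
  | C a => simpa using contDiff_const
  | add p q hp hq => simpa only [map_add] using hp.add hq
  | mul_X p i hp =>
    simp only [map_mul, eval_X]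
    exact hp.mul (contDiff_apply ℂ ℂ i)

lemma local_lift (U : Bool → MvPolynomial (Fin 2) ℂ) (p : Fin 2 → ℂ)
    (hp : eval p (pderiv 0 (U false)) * eval p (pderiv 1 (U true)) -
      eval p (pderiv 1 (U false)) * eval p (pderiv 0 (U true)) ≠ 0)
    (w0 : Bool → ℂ) (s0 : ℂ) (hs : ∀ b, eval p (U b) = s0 * w0 b) :
    ∃ q : ℂ → Fin 2 → ℂ, q s0 = p ∧ ∀ᶠ s in nhds s0, (∀ b, eval (q s) (U b) = s * w0 b) ∧
      DifferentiableAt ℂ q s := by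
  set F : (Fin 2 → ℂ) → (Bool → ℂ) := fun z b => eval z (U b) with hF
  set f' : (Fin 2 → ℂ) →L[ℂ] (Bool → ℂ) := ContinuousLinearMap.pi fun b =>
    (eval p (pderiv 0 (U b)) • (ContinuousLinearMap.proj 0 : (Fin 2 → ℂ) →L[ℂ] ℂ) +
        eval p (pderiv 1 (U b)) • (ContinuousLinearMap.proj 1 : (Fin 2 → ℂ) →L[ℂ] ℂ)) with hf'
  have hFd : HasFDerivAt F f' p := by
    rw [hasFDerivAt_pi]
    intro b
    exact hasFDerivAt_eval (U b) p
  have hFc : ContDiff ℂ 1 F := contDiff_pi.2 fun b => contDiff_eval (U b)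
  have hinj : Function.Injective f' := by
    rw [injective_iff_map_eq_zero]
    intro h hh
    have h1 : eval p (pderiv 0 (U false)) * h 0 + eval p (pderiv 1 (U false)) * h 1 = 0 := by
      simpa [hf'] using congrFun hh false
    have h2 : eval p (pderiv 0 (U true)) * h 0 + eval p (pderiv 1 (U true)) * h 1 = 0 := by
      simpa [hf'] using congrFun hh true
    ext i
    fin_cases i
    · refine (mul_eq_zero.1 (?_ : _ * h 0 = 0)).resolve_left hp
      linear_combination eval p (pderiv 1 (U true)) * h1 - eval p (pderiv 1 (U false)) * h2
    · refine (mul_eq_zero.1 (?_ : _ * h 1 = 0)).resolve_left hp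
      linear_combination eval p (pderiv 0 (U false)) * h2 - eval p (pderiv 0 (U true)) * h1
  let e : (Fin 2 → ℂ) ≃L[ℂ] (Bool → ℂ) :=
    (LinearMap.linearEquivOfInjective (f' : (Fin 2 → ℂ) →ₗ[ℂ] (Bool → ℂ)) hinj
      (by simp)).toContinuousLinearEquiv
  have he : (e : (Fin 2 → ℂ) →L[ℂ] (Bool → ℂ)) = f' := by
    apply ContinuousLinearMap.ext
    intro x
    rfl
  rw [← he] at hFd
  have hc : ContDiffAt ℂ 1 F p := hFc.contDiffAt
  have hst := hc.hasStrictFDerivAt' hFd one_ne_zero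
  set g := hc.localInverse hFd one_ne_zero with hg
  have hgp : g (F p) = p := hc.localInverse_apply_image hFd one_ne_zero
  have hgc : ContDiffAt ℂ 1 g (F p) := hc.to_localInverse hFd one_ne_zero
  have hgr : ∀ᶠ y in nhds (F p), F (g y) = y := hst.eventually_right_inverse
  have hFp : F p = s0 • w0 := by
    ext b
    simp [hF, hs]
  rw [hFp] at hgp hgc hgr
  have hlin : ContDiffAt ℂ 1 (fun s : ℂ => s • w0) s0 := by fun_prop
  refine ⟨fun s => g (s • w0), hgp, ?_⟩
  have hq : ContDiffAt ℂ 1 (fun s : ℂ => g (s • w0)) s0 := ContDiffAt.comp s0 hgc hlin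
  have h1 := hlin.continuousAt.eventually hgr
  have h2 := hq.eventually (by simp)
  filter_upwards [h1, h2] with s hs1 hs2
  refine ⟨fun b => ?_, hs2.differentiableAt one_ne_zero⟩
  have := congrFun hs1 b
  simpa [hF] using this

lemma dense_ne_zero (f : MvPolynomial (Fin 2) ℂ) (hf : f ≠ 0) :
    Dense {z : Fin 2 → ℂ | eval z f ≠ 0} := by
  have han : AnalyticOnNhd ℂ (fun z : Fin 2 → ℂ => eval z f) Set.univ := by
    have := AnalyticOnNhd.aeval_mvPolynomial (𝕜 := ℂ) (f := fun z : Fin 2 → ℂ => z) (s := Set.univ)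
      (fun i x _ => (ContinuousLinearMap.proj i : (Fin 2 → ℂ) →L[ℂ] ℂ).analyticAt x) f
    simpa [aeval_eq_eval] using this
  intro z
  rw [mem_closure_iff_frequently]
  intro h
  apply hf
  have h1 : (fun z : Fin 2 → ℂ => eval z f) =ᶠ[nhds z] 0 := by
    filter_upwards [h] with y hy
    simpa using hy
  have h2 := han.eqOn_zero_of_preconnected_of_eventuallyEq_zero isPreconnected_univ (Set.mem_univ z) h1
  apply MvPolynomial.funext
  intro y
  simpa using h2 (Set.mem_univ y)

lemma exists_path (r : Polynomial ℂ) (h1 : r.eval 1 ≠ 0) : ∃ θ : ℝ, θ ∈ Set.Icc (0 : ℝ) 1 ∧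
    ∀ t : ℝ, t ∈ Set.Ico (0 : ℝ) 1 →
      r.eval (((1 - t : ℝ) : ℂ) + ((θ * (t * (1 - t)) : ℝ) : ℂ) * Complex.I) ≠ 0 := by
  have hr : r ≠ 0 := by
    rintro rfl
    simp at h1
  have hfin : ((fun ζ : ℂ => ζ.im / (ζ.re * (1 - ζ.re))) '' {ζ | r.IsRoot ζ}).Finite :=
    (Polynomial.finite_setOfPred_isRoot hr).image _
  obtain ⟨θ, hθ, hθ2⟩ := (Set.Icc_infinite (zero_lt_one' ℝ)).exists_notMem_finite hfin
  refine ⟨θ, hθ, fun t ht h => ?_⟩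
  rcases eq_or_lt_of_le ht.1 with h0 | h0
  · subst h0
    simp at h
    exact h1 h
  · apply hθ2
    refine ⟨_, h, ?_⟩
    have h2 : 1 - t ≠ 0 := by linarith [ht.2]
    simp
    field_simp

lemma legendre_bound (H : MvPolynomial (Fin 2) ℂ) (U : Bool → MvPolynomial (Fin 2) ℂ)
    (hU0 : U false = pderiv 0 H) (hU1 : U true = pderiv 1 H) (R : ℝ)
    (hR : ∀ z : Fin 2 → ℂ, ‖fun b => eval z (U b)‖ ≤ 2 → ‖z‖ ≤ R)
    (hcrit : ∀ z : Fin 2 → ℂ, (∀ b, eval z (U b) = 0) → eval z H = 0)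
    (d : MvPolynomial Bool ℂ)
    (hd : ∀ z : Fin 2 → ℂ, eval z (pderiv 0 (U false)) * eval z (pderiv 1 (U true)) -
      eval z (pderiv 1 (U false)) * eval z (pderiv 0 (U true)) = 0 → eval (fun b => eval z (U b)) d = 0)
    (p0 : Fin 2 → ℂ) (hp0 : ‖fun b => eval p0 (U b)‖ ≤ 1) (hdp : eval (fun b => eval p0 (U b)) d ≠ 0) :
    ‖eval p0 (X 0 * U false + X 1 * U true - H)‖ ≤ (4 * R + 1) * ‖fun b => eval p0 (U b)‖ := by
  set w0 : Bool → ℂ := fun b => eval p0 (U b) with hw0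
  set G := X 0 * U false + X 1 * U true - H with hG
  set m := ‖w0‖ with hm
  have hR0 : 0 ≤ R := (norm_nonneg _).trans (hR p0 (hp0.trans (by norm_num)))
  have hGcrit : ∀ z : Fin 2 → ℂ, (∀ b, eval z (U b) = 0) → eval z G = 0 := by
    intro z hz
    simp [hG, hz, hcrit z hz]
  have hm0 : 0 ≤ m := norm_nonneg _
  rcases hm0.eq_or_lt with h | hmpos
  · have : w0 = 0 := norm_eq_zero.1 h.symm
    rw [hGcrit p0 (fun b => congrFun this b), ← h]
    simp
  -- polynomial along the line
  let r : Polynomial ℂ := aeval (fun b => Polynomial.C (w0 b) * Polynomial.X) d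
  have hr : ∀ s : ℂ, r.eval s = eval (fun b => s * w0 b) d := by
    intro s
    have : ((Polynomial.aeval s).comp (aeval (fun b => Polynomial.C (w0 b) * Polynomial.X)) :
        MvPolynomial Bool ℂ →ₐ[ℂ] ℂ) = aeval (fun b => s * w0 b) := by
      apply MvPolynomial.algHom_ext
      intro b
      simp only [AlgHom.comp_apply, aeval_X, map_mul, Polynomial.aeval_C, Polynomial.aeval_X, Algebra.algebraMap_self, RingHom.id_apply]
      exact mul_comm _ _
    have h2 := congrArg (fun φ : MvPolynomial Bool ℂ →ₐ[ℂ] ℂ => φ d) this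
    simpa [r, Polynomial.aeval_def, aeval_eq_eval, Polynomial.coe_aeval_eq_eval] using h2
  obtain ⟨θ, hθ, hpath⟩ := exists_path r (by rw [hr]; simpa using hdp)
  set s : ℝ → ℂ := fun t => ((1 - t : ℝ) : ℂ) + ((θ * (t * (1 - t)) : ℝ) : ℂ) * Complex.I with hs
  have hsc : Continuous s := by
    rw [hs]
    fun_prop
  have hsn : ∀ t ∈ Set.Icc (0 : ℝ) 1, ‖s t‖ ≤ 2 := by
    intro t ht
    rw [hs]
    refine (norm_add_le _ _).trans ?_
    rw [norm_mul, Complex.norm_I, Complex.norm_real, Complex.norm_real, Real.norm_eq_abs,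
      Real.norm_eq_abs, abs_of_nonneg (by linarith [ht.2]), abs_of_nonneg
      (mul_nonneg hθ.1 (mul_nonneg ht.1 (by linarith [ht.2])))]
    have : θ * (t * (1 - t)) ≤ 1 := by
      refine mul_le_one₀ hθ.2 (mul_nonneg ht.1 (by linarith [ht.2])) ?_
      nlinarith [ht.1, ht.2]
    linarith [ht.1]
  have hsd : ∀ t : ℝ, HasDerivAt s (((-1 : ℝ) : ℂ) + ((θ * (1 - 2 * t) : ℝ) : ℂ) * Complex.I) t := by
    intro t
    have h1 : HasDerivAt (fun t : ℝ => 1 - t) (-1) t := by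
      simpa using (hasDerivAt_id t).const_sub 1
    have h2 : HasDerivAt (fun t : ℝ => θ * (t * (1 - t))) (θ * (1 - 2 * t)) t := by
      have := ((hasDerivAt_id t).mul h1).const_mul θ
      refine this.congr_deriv ?_
      simp
      left
      ring
    exact h1.ofReal_comp.add (h2.ofReal_comp.mul_const Complex.I)
  have hsdn : ∀ t ∈ Set.Icc (0 : ℝ) 1,
      ‖(((-1 : ℝ) : ℂ) + ((θ * (1 - 2 * t) : ℝ) : ℂ) * Complex.I)‖ ≤ 2 := by
    intro t ht
    refine (norm_add_le _ _).trans ?_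
    rw [norm_mul, Complex.norm_I, Complex.norm_real, Complex.norm_real, Real.norm_eq_abs,
      Real.norm_eq_abs, abs_mul, abs_of_nonneg hθ.1]
    have : |1 - 2 * t| ≤ 1 := abs_le.2 ⟨by linarith [ht.2], by linarith [ht.1]⟩
    have : θ * |1 - 2 * t| ≤ 1 := mul_le_one₀ hθ.2 (abs_nonneg _) this
    norm_num
    linarith
  set Cm := (4 * R + 1) * m with hCm
  have hcont : ∀ f : MvPolynomial (Fin 2) ℂ, Continuous fun z : Fin 2 → ℂ => eval z f :=
    fun f => MvPolynomial.continuous_eval f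
  set T : Set ℝ := {t | t ∈ Set.Icc (0 : ℝ) 1 ∧ ∃ p : Fin 2 → ℂ, (∀ b, eval p (U b) = s t * w0 b) ∧
    ‖eval p0 G‖ - Cm * t ≤ ‖eval p G‖} with hT
  have hbd : ∀ t ∈ Set.Icc (0 : ℝ) 1, ∀ p : Fin 2 → ℂ, (∀ b, eval p (U b) = s t * w0 b) → ‖p‖ ≤ R := by
    intro t ht p hp
    apply hR
    rw [pi_norm_le_iff_of_nonneg (by norm_num)]
    intro b
    rw [hp, norm_mul]
    have h1 : ‖w0 b‖ ≤ 1 := (norm_le_pi_norm w0 b).trans hp0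
    have := hsn t ht
    nlinarith [norm_nonneg (s t), norm_nonneg (w0 b)]
  have hTc : IsClosed T := by
    set S : Set (ℝ × (Fin 2 → ℂ)) := (Set.Icc (0 : ℝ) 1 ×ˢ Metric.closedBall 0 R) ∩
      ({x | ∀ b, eval x.2 (U b) = s x.1 * w0 b} ∩ {x | ‖eval p0 G‖ - Cm * x.1 ≤ ‖eval x.2 G‖}) with hS
    have hSc : IsCompact S := by
      refine (isCompact_Icc.prod (isCompact_closedBall _ _)).inter_right (IsClosed.inter ?_ ?_)
      · rw [Set.ofPred_forall]
        refine isClosed_iInter fun b => isClosed_eq ((hcont _).comp continuous_snd) ?_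
        exact (hsc.comp continuous_fst).mul continuous_const
      · exact isClosed_le (by fun_prop) ((hcont _).comp continuous_snd).norm
    have : T = Prod.fst '' S := by
      ext t
      constructor
      · rintro ⟨ht, p, hp1, hp2⟩
        exact ⟨(t, p), ⟨⟨ht, by simpa using hbd t ht p hp1⟩, hp1, hp2⟩, rfl⟩
      · rintro ⟨⟨t, p⟩, ⟨⟨ht, _⟩, hp1, hp2⟩, rfl⟩
        exact ⟨ht, p, hp1, hp2⟩
    rw [this]
    exact (hSc.image continuous_fst).isClosed
  have hmain : Set.Icc (0 : ℝ) 1 ⊆ T := by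
    refine IsClosed.Icc_subset_of_forall_exists_gt (hTc.inter isClosed_Icc) ?_ ?_
    · refine ⟨by simp, p0, ?_, by simp⟩
      intro b
      simp [hs, hw0]
    · rintro x ⟨⟨hx, p, hp1, hp2⟩, hx2⟩ y hy
      have hΔ := mt (hd p) (by
        have := hpath x hx2
        rw [hr] at this
        simpa only [hp1] using this)
      obtain ⟨q, hq0, hq⟩ := local_lift U p hΔ w0 (s x) hp1
      have hqd : HasDerivAt q (deriv q (s x)) (s x) := hq.self_of_nhds.2.hasDerivAt
      set q' := deriv q (s x) with hq'
      have hu : ∀ b, eval p (pderiv 0 (U b)) * q' 0 + eval p (pderiv 1 (U b)) * q' 1 = w0 b := by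
        intro b
        have h1 := hasDerivAt_eval_comp (U b) q q' (s x) hqd
        have h2 : HasDerivAt (fun s : ℂ => s * w0 b) (w0 b) (s x) := by
          simpa using (hasDerivAt_id (s x)).mul_const (w0 b)
        have h3 : (fun s => eval (q s) (U b)) =ᶠ[nhds (s x)] fun s => s * w0 b := by
          filter_upwards [hq] with s hs
          exact hs.1 b
        have := h1.unique (h2.congr_of_eventuallyEq h3)
        rwa [hq0] at this
      have hGd := hasDerivAt_eval_comp G q q' (s x) hqd
      rw [hq0] at hGd
      have hval : eval p (pderiv 0 G) * q' 0 + eval p (pderiv 1 G) * q' 1 =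
          p 0 * w0 false + p 1 * w0 true := by
        rw [← hu false, ← hu true, hG]
        simp [Derivation.leibniz, pderiv_X, hU0, hU1]
        ring
      rw [hval] at hGd
      have hcomp := hGd.scomp x (hsd x)
      have hpR : ‖p‖ ≤ R := hbd x hx p hp1
      have hnorm : ‖(((-1 : ℝ) : ℂ) + ((θ * (1 - 2 * x) : ℝ) : ℂ) * Complex.I) •
          (p 0 * w0 false + p 1 * w0 true)‖ < Cm := by
        rw [norm_smul]
        have h1 : ‖p 0 * w0 false + p 1 * w0 true‖ ≤ 2 * (R * m) := by
          refine (norm_add_le _ _).trans ?_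
          rw [norm_mul, norm_mul]
          have a1 := mul_le_mul ((norm_le_pi_norm p 0).trans hpR) (norm_le_pi_norm w0 false)
            (norm_nonneg _) hR0
          have a2 := mul_le_mul ((norm_le_pi_norm p 1).trans hpR) (norm_le_pi_norm w0 true)
            (norm_nonneg _) hR0
          linarith
        have h2 := mul_le_mul (hsdn x hx) h1 (norm_nonneg _) (by norm_num)
        refine h2.trans_lt ?_
        rw [hCm]
        nlinarith
      have hev := (hcomp.hasDerivWithinAt (s := Set.Ioi x)).limsup_norm_slope_le hnorm
      have hev2 : ∀ᶠ t in nhdsWithin x (Set.Ioi x), ∀ b, eval (q (s t)) (U b) = s t * w0 b := by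
        have := (hsc.tendsto x).eventually hq
        exact (this.filter_mono nhdsWithin_le_nhds).mono fun t ht => ht.1
      have hev3 : ∀ᶠ t in nhdsWithin x (Set.Ioi x), t ∈ Set.Ioc x (min y 1) :=
        Ioc_mem_nhdsGT (lt_min hy hx2.2)
      obtain ⟨t, ht1, ht2, ht3⟩ := (hev.and (hev2.and hev3)).exists
      refine ⟨t, ⟨⟨hx.1.trans ht3.1.le, ht3.2.trans (min_le_right _ _)⟩, q (s t), ht2, ?_⟩,
        ht3.1, ht3.2.trans (min_le_left _ _)⟩
      have htx : 0 < t - x := sub_pos.2 ht3.1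
      simp only [Function.comp, hq0] at ht1
      rw [Real.norm_of_nonneg htx.le, inv_mul_lt_iff₀ htx] at ht1
      have := norm_sub_norm_le (eval p G) (eval (q (s t)) G)
      rw [norm_sub_rev] at this
      nlinarith
  obtain ⟨_, p, hp1, hp2⟩ := hmain (Set.right_mem_Icc.2 zero_le_one)
  have : eval p G = 0 := by
    apply hGcrit
    intro b
    rw [hp1]
    simp [hs]
  rw [this] at hp2
  simp at hp2
  linarith


lemma hc_pderiv (n : ℕ) (i : Fin 2) (H : MvPolynomial (Fin 2) ℂ) :
    homogeneousComponent n (pderiv i H) = pderiv i (homogeneousComponent (n + 1) H) := by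
  ext m
  rw [coeff_pderiv, coeff_homogeneousComponent, coeff_homogeneousComponent, coeff_pderiv]
  simp only [map_add, Finsupp.degree_single, add_left_inj]
  split_ifs <;> simp

lemma pderiv_comm' (i j : Fin 2) (f : MvPolynomial (Fin 2) ℂ) :
    pderiv i (pderiv j f) = pderiv j (pderiv i f) := by
  induction f using MvPolynomial.induction_on with
  | C a => simp
  | add p q hp hq => simp [hp, hq]
  | mul_X p k hp =>
    simp only [Derivation.leibniz, smul_eq_mul, map_add, hp, pderiv_X]
    have : ∀ (a b c : Fin 2), pderiv c (Pi.single (M := fun _ => MvPolynomial (Fin 2) ℂ) a 1 b) = 0 := by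
      intro a b c
      by_cases h : b = a
      · subst h; simp
      · simp [h]
    simp only [this]
    ring

lemma totalDegree_pderiv_le' (n : ℕ) (i : Fin 2) (H : MvPolynomial (Fin 2) ℂ)
    (h : H.totalDegree ≤ n + 1) : (pderiv i H).totalDegree ≤ n := by
  refine Finset.sup_le fun m hm => ?_
  rw [mem_support_iff, coeff_pderiv] at hm
  have h1 : m + Finsupp.single i 1 ∈ H.support := mem_support_iff.2 (left_ne_zero_of_mul hm)
  have h2 := (le_totalDegree h1).trans h
  have h3 : ∀ s : Fin 2 →₀ ℕ, (s.sum fun _ e => e) = s.degree := fun s => rfl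
  rw [h3] at h2 ⊢
  rw [map_add, Finsupp.degree_single] at h2
  omega

lemma jac_ne_zero (U : Bool → MvPolynomial (Fin 2) ℂ)
    (hi : Algebra.IsIntegral (Algebra.adjoin ℂ (Set.range U)) (MvPolynomial (Fin 2) ℂ)) :
    pderiv 0 (U false) * pderiv 1 (U true) - pderiv 1 (U false) * pderiv 0 (U true) ≠ 0 := by
  intro h
  have key : ∀ a b : MvPolynomial (Fin 2) ℂ, (∀ c, a * pderiv 0 (U c) + b * pderiv 1 (U c) = 0) →
      a = 0 ∧ b = 0 := by
    intro a b hab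
    set D : Derivation ℂ (MvPolynomial (Fin 2) ℂ) (MvPolynomial (Fin 2) ℂ) :=
      a • pderiv 0 + b • pderiv 1 with hD
    have hDU : ∀ c, D (U c) = 0 := by
      intro c
      simpa [hD] using hab c
    have h0 := deriv_kill U hi (X 0) D hDU
    have h1 := deriv_kill U hi (X 1) D hDU
    constructor
    · simpa [hD, pderiv_X] using h0
    · simpa [hD, pderiv_X] using h1
  have k1 := key (pderiv 1 (U false)) (- pderiv 0 (U false)) (by
    intro c
    cases c
    · ring
    · linear_combination -h)
  have k2 := key (pderiv 1 (U true)) (- pderiv 0 (U true)) (by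
    intro c
    cases c
    · linear_combination h
    · ring)
  have k3 := key 1 0 (by
    intro c
    cases c
    · simpa using k1.2
    · simpa using k2.2)
  exact one_ne_zero k3.1

lemma exists_disc (U : Bool → MvPolynomial (Fin 2) ℂ)
    (hi : Algebra.IsIntegral (Algebra.adjoin ℂ (Set.range U)) (MvPolynomial (Fin 2) ℂ))
    (Δ : MvPolynomial (Fin 2) ℂ) (hΔ : Δ ≠ 0) :
    ∃ d : MvPolynomial Bool ℂ, aeval U d ≠ 0 ∧ ∀ z : Fin 2 → ℂ, eval z Δ = 0 →
      eval (fun b => eval z (U b)) d = 0 := by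
  obtain ⟨P, hP, hPK, hdvd, hroot⟩ := minpoly_package U hi Δ
  have hev : ∀ (z : Fin 2 → ℂ) (d : MvPolynomial Bool ℂ), eval z (aeval U d) = eval (fun b => eval z (U b)) d := by
    intro z d
    induction d using MvPolynomial.induction_on with
    | C a => simp [MvPolynomial.algebraMap_eq]
    | add p q hp hq => simp only [map_add, hp, hq]
    | mul_X p b hp => simp only [map_mul, hp, aeval_X, eval_X]
  have h0 : P = Polynomial.X * P.divX + Polynomial.C (P.coeff 0) := (Polynomial.X_mul_divX_add P).symm
  rw [h0, Polynomial.eval₂_add, Polynomial.eval₂_mul, Polynomial.eval₂_X, Polynomial.eval₂_C] at hPK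
  refine ⟨P.coeff 0, ?_, ?_⟩
  · intro hc
    have hc' : (aeval U : MvPolynomial Bool ℂ →ₐ[ℂ] MvPolynomial (Fin 2) ℂ).toRingHom (P.coeff 0) = 0 := hc
    rw [hc', add_zero] at hPK
    have h1 := hdvd _ ((mul_eq_zero.1 hPK).resolve_left hΔ)
    have hN : P.natDegree ≠ 0 := by
      intro hN
      have := hP.natDegree_eq_zero.mp hN
      rw [this] at hc
      simp at hc
    have h2 : P.divX ≠ 0 := by
      intro h3
      rw [h3] at h0
      apply hN
      rw [h0]
      simp
    have h3 := Polynomial.natDegree_le_of_dvd h1 h2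
    rw [Polynomial.natDegree_divX_eq_natDegree_tsub_one] at h3
    omega
  · intro z hz
    rw [← hev]
    have := congrArg (eval z) hPK
    rw [map_add, map_mul, hz, zero_mul, zero_add, map_zero] at this
    exact this


lemma main_identity (n : ℕ) (hn : 1 ≤ n) (H : MvPolynomial (Fin 2) ℂ) (hdeg : H.totalDegree ≤ n + 1)
    (U : Bool → MvPolynomial (Fin 2) ℂ) (hU0 : U false = pderiv 0 H) (hU1 : U true = pderiv 1 H)
    (hU : ∀ b, (U b).totalDegree ≤ n)
    (hz : ∀ z : Fin 2 → ℂ, (∀ b, eval z (homogeneousComponent n (U b)) = 0) → z = 0)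
    (hcrit : ∀ z : Fin 2 → ℂ, (∀ b, eval z (U b) = 0) → eval z H = 0) :
    C (n : ℂ) * ((U false * pderiv 1 (U true) - U true * pderiv 1 (U false)) * U false +
      (U true * pderiv 0 (U false) - U false * pderiv 0 (U true)) * U true) =
    C ((n : ℂ) + 1) * H *
      (pderiv 0 (U false) * pderiv 1 (U true) - pderiv 1 (U false) * pderiv 0 (U true)) := by
  have hi := integral_aeval n hn U hU hz
  set Δ := pderiv 0 (U false) * pderiv 1 (U true) - pderiv 1 (U false) * pderiv 0 (U true) with hΔ
  obtain ⟨d, hd0, hd⟩ := exists_disc U hi Δ (jac_ne_zero U hi)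
  obtain ⟨C0, hC0, hprop⟩ := proper_bound n hn U hU hz
  set R := C0 * 3 with hRdef
  have hmax : ∀ z : Fin 2 → ℂ, ‖z‖ ≤ (max 1 ‖z‖) ^ n := fun z =>
    (le_max_right 1 ‖z‖).trans (le_self_pow₀ (le_max_left _ _) (by omega))
  have hR : ∀ z : Fin 2 → ℂ, ‖fun b => eval z (U b)‖ ≤ 2 → ‖z‖ ≤ R := by
    intro z hz2
    have := (hmax z).trans (hprop z)
    nlinarith
  have hR0 : 0 ≤ R := by positivity
  set G := X 0 * U false + X 1 * U true - H with hG
  have hcont : ∀ f : MvPolynomial (Fin 2) ℂ, Continuous fun z : Fin 2 → ℂ => eval z f :=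
    fun f => MvPolynomial.continuous_eval f
  have hFc : Continuous fun z : Fin 2 → ℂ => ‖fun b => eval z (U b)‖ :=
    (continuous_pi fun b => hcont (U b)).norm
  have hev : ∀ (z : Fin 2 → ℂ) (d : MvPolynomial Bool ℂ), eval z (aeval U d) = eval (fun b => eval z (U b)) d := by
    intro z d
    induction d using MvPolynomial.induction_on with
    | C a => simp [MvPolynomial.algebraMap_eq]
    | add p q hp hq => simp only [map_add, hp, hq]
    | mul_X p b hp => simp only [map_mul, hp, aeval_X, eval_X]
  have hB : ∀ p : Fin 2 → ℂ, ‖fun b => eval p (U b)‖ < 1 →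
      ‖eval p G‖ ≤ (4 * R + 1) * ‖fun b => eval p (U b)‖ := by
    intro p hp
    have hcl : IsClosed {p : Fin 2 → ℂ | ‖eval p G‖ ≤ (4 * R + 1) * ‖fun b => eval p (U b)‖} :=
      isClosed_le (hcont G).norm (continuous_const.mul hFc)
    have hop : IsOpen {p : Fin 2 → ℂ | ‖fun b => eval p (U b)‖ < 1} :=
      isOpen_lt hFc continuous_const
    have h1 := (dense_ne_zero _ hd0).open_subset_closure_inter hop hp
    refine (hcl.closure_subset_iff.2 ?_) h1
    rintro q ⟨hq1, hq2⟩
    refine legendre_bound H U hU0 hU1 R hR hcrit d ?_ q (le_of_lt hq1) ?_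
    · intro z hz1
      apply hd
      simpa [hΔ] using hz1
    · rw [← hev]
      exact hq2
  -- the polynomial K
  set K := C ((n : ℂ) + 1) * H - X 0 * U false - X 1 * U true with hK
  have hKdeg : K.totalDegree ≤ n := by
    have h1 : K.totalDegree ≤ n + 1 := by
      have hx : ∀ (i : Fin 2) b, (X i * U b).totalDegree ≤ n + 1 := by
        intro i b
        refine (totalDegree_mul _ _).trans ?_
        rw [totalDegree_X]
        have := hU b
        omega
      refine (totalDegree_sub _ _).trans (max_le ((totalDegree_sub _ _).trans (max_le ?_ (hx _ _))) (hx _ _))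
      refine (totalDegree_mul _ _).trans ?_
      rw [totalDegree_C]
      omega
    have h2 : homogeneousComponent (n + 1) K = 0 := by
      have e1 : ∀ (i : Fin 2) (b : Bool), homogeneousComponent (n + 1) (X i * U b) =
          X i * homogeneousComponent n (U b) := by
        intro i b
        rw [mul_comm, hc_mul _ _ 1 _ (isHomogeneous_X _ _) (by omega), mul_comm]
        rfl
      rw [hK, map_sub, map_sub, homogeneousComponent_C_mul, e1, e1, hU0, hU1, hc_pderiv, hc_pderiv]
      have := (homogeneousComponent_isHomogeneous (n + 1) H).sum_X_mul_pderiv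
      rw [Fin.sum_univ_two] at this
      rw [sub_sub, this]
      simp [nsmul_eq_mul]
    have h3 := totalDegree_sub_hc K n h1
    rwa [h2, sub_zero] at h3
  obtain ⟨C1, hC1, hKb⟩ := poly_bound K n hKdeg
  have hKG : K = C (n : ℂ) * (X 0 * U false + X 1 * U true) - C ((n : ℂ) + 1) * G := by
    rw [hK, hG, map_add, map_one]
    ring
  have hKbound : ∀ z : Fin 2 → ℂ, ‖eval z K‖ ≤
      (n * (2 * R) + (n + 1) * (4 * R + 1) + 2 * (C1 * C0)) * ‖fun b => eval z (U b)‖ := by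
    intro z
    set F : Bool → ℂ := fun b => eval z (U b) with hF
    have hF0 : 0 ≤ ‖F‖ := norm_nonneg _
    have hCC : 0 ≤ C1 * C0 := by positivity
    rcases lt_or_ge ‖F‖ 1 with h | h
    · have h1 : ‖eval z G‖ ≤ (4 * R + 1) * ‖F‖ := hB z h
      have hzR : ‖z‖ ≤ R := hR z (by linarith : ‖F‖ ≤ 2)
      have h2 : ‖z 0 * F false + z 1 * F true‖ ≤ 2 * R * ‖F‖ := by
        refine (norm_add_le _ _).trans ?_
        rw [norm_mul, norm_mul]
        have a1 := mul_le_mul ((norm_le_pi_norm z 0).trans hzR) (norm_le_pi_norm F false)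
          (norm_nonneg _) hR0
        have a2 := mul_le_mul ((norm_le_pi_norm z 1).trans hzR) (norm_le_pi_norm F true)
          (norm_nonneg _) hR0
        linarith
      have h3 : eval z K = n * (z 0 * F false + z 1 * F true) - ((n : ℂ) + 1) * eval z G := by
        rw [hKG]
        simp [hF]
      rw [h3]
      refine (norm_sub_le _ _).trans ?_
      rw [norm_mul, norm_mul]
      have h4 : ‖(n : ℂ) + 1‖ = n + 1 := by
        have : ((n : ℂ) + 1) = ((n + 1 : ℕ) : ℂ) := by push_cast; ring
        rw [this, Complex.norm_natCast]
        push_cast; ring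
      rw [h4, Complex.norm_natCast]
      have a1 : (n : ℝ) * ‖z 0 * F false + z 1 * F true‖ ≤ n * (2 * R * ‖F‖) := by gcongr
      have a2 : ((n : ℝ) + 1) * ‖eval z G‖ ≤ (n + 1) * ((4 * R + 1) * ‖F‖) := by gcongr
      have a3 : 0 ≤ 2 * (C1 * C0) * ‖F‖ := by positivity
      linarith
    · have h1 := hKb z
      have h2 : max 1 ‖z‖ ^ n ≤ C0 * (1 + ‖F‖) := hprop z
      have h3 : C1 * max 1 ‖z‖ ^ n ≤ C1 * (C0 * (1 + ‖F‖)) := by gcongr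
      have h4 : C1 * C0 * (1 + ‖F‖) ≤ C1 * C0 * (2 * ‖F‖) :=
        mul_le_mul_of_nonneg_left (by linarith) hCC
      have a1 : 0 ≤ (n * (2 * R) + (n + 1) * (4 * R + 1)) * ‖F‖ := by positivity
      linarith
  -- the derivation
  set D : Derivation ℂ (MvPolynomial (Fin 2) ℂ) (MvPolynomial (Fin 2) ℂ) :=
    (U false * pderiv 1 (U true) - U true * pderiv 1 (U false)) • pderiv 0 +
      (U true * pderiv 0 (U false) - U false * pderiv 0 (U true)) • pderiv 1 with hD
  have hDU : ∀ b, D (U b) = Δ * U b := by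
    intro b
    cases b
    · simp only [hD, Derivation.add_apply, Derivation.smul_apply, smul_eq_mul, hΔ]
      ring
    · simp only [hD, Derivation.add_apply, Derivation.smul_apply, smul_eq_mul, hΔ]
      ring
  have hDK := deriv_scale U hi K Δ _ hKbound D hDU
  have hDH : D H = (U false * pderiv 1 (U true) - U true * pderiv 1 (U false)) * U false +
      (U true * pderiv 0 (U false) - U false * pderiv 0 (U true)) * U true := by
    simp only [hD, Derivation.add_apply, Derivation.smul_apply, smul_eq_mul, hU0, hU1]
  have hDX0 : D (X 0) = U false * pderiv 1 (U true) - U true * pderiv 1 (U false) := by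
    simp [hD, pderiv_X]
  have hDX1 : D (X 1) = U true * pderiv 0 (U false) - U false * pderiv 0 (U true) := by
    simp [hD, pderiv_X]
  have hDC : D (C ((n : ℂ) + 1)) = 0 := D.map_algebraMap _
  rw [hK] at hDK
  simp only [map_sub, Derivation.leibniz, smul_eq_mul, hDU, hDX0, hDX1, hDC] at hDK
  rw [hDH] at hDK
  rw [map_add, map_one] at hDK ⊢
  linear_combination hDK


lemma eventually_const_of_deriv (f : ℂ → ℂ) (c : ℂ) (h : ∀ᶠ x in nhds c, HasDerivAt f 0 x) :
    ∀ᶠ x in nhds c, f x = f c := by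
  obtain ⟨ε, hε, hb⟩ := Metric.eventually_nhds_iff_ball.1 h
  refine Metric.eventually_nhds_iff_ball.2 ⟨ε, hε, fun y hy => ?_⟩
  exact Metric.isOpen_ball.is_const_of_deriv_eq_zero (convex_ball c ε).isPreconnected
    (fun x hx => (hb x hx).differentiableAt.differentiableWithinAt) (fun x hx => (hb x hx).deriv)
    hy (Metric.mem_ball_self hε)

lemma poly_eq_of_eventually (r : Polynomial ℂ) (c : ℂ) (h : ∀ᶠ x in nhds c, r.eval x = 0) : r = 0 := by
  by_contra hr
  have hfin := Polynomial.finite_setOfPred_isRoot hr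
  obtain ⟨ε, hε, hb⟩ := Metric.eventually_nhds_iff_ball.1 h
  have : (Metric.ball c ε).Infinite := by
    apply infinite_of_mem_nhds c (Metric.ball_mem_nhds c hε)
  exact this (hfin.subset fun x hx => hb x hx)

/-- Pointwise algebraic identity. -/
lemma alg_identity (n u v a b c t0 t1 t2 t3 h : ℂ)
    (I0 : n * ((u * c - v * b) * u + (v * a - u * b) * v) = (n + 1) * h * (a * c - b * b))
    (Ix : n * ((a * c + u * t2 - (b * b + v * t1)) * u + (u * c - v * b) * a +
      ((b * a + v * t0 - (a * b + u * t1)) * v + (v * a - u * b) * b)) =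
      (n + 1) * (u * (a * c - b * b) + h * (t0 * c + a * t2 - (t1 * b + b * t1))))
    (Iy : n * ((b * c + u * t3 - (c * b + v * t2)) * u + (u * c - v * b) * b +
      ((c * a + v * t1 - (b * b + u * t2)) * v + (v * a - u * b) * c)) =
      (n + 1) * (v * (a * c - b * b) + h * (t1 * c + a * t3 - (t2 * b + b * t2)))) :
    n * (a * c - b * b) * ((a * c + u * t2 - (b * b + v * t1)) * (u * c - v * b) +
      (b * c + u * t3 - (c * b + v * t2)) * (v * a - u * b)) -
      n * (u * c - v * b) * ((t0 * c + a * t2 - (t1 * b + b * t1)) * (u * c - v * b) +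
        (t1 * c + a * t3 - (t2 * b + b * t2)) * (v * a - u * b))
      = (a * c - b * b) ^ 2 * (u * c - v * b) ∧
    n * (a * c - b * b) * ((b * a + v * t0 - (a * b + u * t1)) * (u * c - v * b) +
      (c * a + v * t1 - (b * b + u * t2)) * (v * a - u * b)) -
      n * (v * a - u * b) * ((t0 * c + a * t2 - (t1 * b + b * t1)) * (u * c - v * b) +
        (t1 * c + a * t3 - (t2 * b + b * t2)) * (v * a - u * b))
      = (a * c - b * b) ^ 2 * (v * a - u * b) := by
  constructor
  · linear_combination (c * (a * c - b * b)) * Ix - c * (t0 * c + a * t2 - (t1 * b + b * t1)) * I0 -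
      (b * (a * c - b * b)) * Iy + b * (t1 * c + a * t3 - (t2 * b + b * t2)) * I0
  · linear_combination (a * (a * c - b * b)) * Iy - a * (t1 * c + a * t3 - (t2 * b + b * t2)) * I0 -
      (b * (a * c - b * b)) * Ix + b * (t0 * c + a * t2 - (t1 * b + b * t1)) * I0


lemma poly_identity (n : ℂ) (H u v a b c : MvPolynomial (Fin 2) ℂ)
    (hu : pderiv 0 H = u) (hv : pderiv 1 H = v) (ha : pderiv 0 u = a) (hb : pderiv 1 u = b)
    (hc : pderiv 1 v = c)
    (I : C n * ((u * c - v * b) * u + (v * a - u * b) * v) = C (n + 1) * H * (a * c - b * b))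
    (z : Fin 2 → ℂ) :
    n * eval z (a * c - b * b) * (eval z (pderiv 0 (u * c - v * b)) * eval z (u * c - v * b) +
        eval z (pderiv 1 (u * c - v * b)) * eval z (v * a - u * b)) -
      n * eval z (u * c - v * b) * (eval z (pderiv 0 (a * c - b * b)) * eval z (u * c - v * b) +
        eval z (pderiv 1 (a * c - b * b)) * eval z (v * a - u * b)) =
      eval z (a * c - b * b) ^ 2 * eval z (u * c - v * b) ∧
    n * eval z (a * c - b * b) * (eval z (pderiv 0 (v * a - u * b)) * eval z (u * c - v * b) +
        eval z (pderiv 1 (v * a - u * b)) * eval z (v * a - u * b)) -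
      n * eval z (v * a - u * b) * (eval z (pderiv 0 (a * c - b * b)) * eval z (u * c - v * b) +
        eval z (pderiv 1 (a * c - b * b)) * eval z (v * a - u * b)) =
      eval z (a * c - b * b) ^ 2 * eval z (v * a - u * b) := by
  have hv0 : pderiv 0 v = b := by rw [← hv, ← hb, ← hu, pderiv_comm']
  have hb0 : pderiv 0 b = pderiv 1 a := by rw [← hb, ← ha, pderiv_comm']
  have hc0 : pderiv 0 c = pderiv 1 b := by rw [← hc, ← hv0, pderiv_comm']
  have I0 := congrArg (eval z) I
  have Ix := congrArg (fun f => eval z (pderiv 0 f)) I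
  have Iy := congrArg (fun f => eval z (pderiv 1 f)) I
  simp only [map_add, map_mul, map_sub, Derivation.leibniz, smul_eq_mul, hu, hv, ha, hb, hc, hv0, hb0,
    hc0, eval_C, pderiv_C, mul_zero, add_zero, map_one, pderiv_one] at I0 Ix Iy ⊢
  have := alg_identity n (eval z u) (eval z v) (eval z a) (eval z b) (eval z c)
    (eval z (pderiv 0 a)) (eval z (pderiv 1 a)) (eval z (pderiv 1 b)) (eval z (pderiv 1 c)) (eval z H)
    (by linear_combination I0) (by linear_combination Ix) (by linear_combination Iy)
  constructor
  · linear_combination this.1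
  · linear_combination this.2

lemma deriv_quot_zero (f Δ : MvPolynomial (Fin 2) ℂ) (Q : ℂ → Fin 2 → ℂ) (Q' : Fin 2 → ℂ) (τ n x y : ℂ)
    (hQ : HasDerivAt Q Q' τ) (hτ : τ ≠ 0) (hΔ : eval (Q τ) Δ ≠ 0)
    (h0 : τ * eval (Q τ) Δ * Q' 0 = n * x) (h1 : τ * eval (Q τ) Δ * Q' 1 = n * y)
    (hid : n * eval (Q τ) Δ * (eval (Q τ) (pderiv 0 f) * x + eval (Q τ) (pderiv 1 f) * y) -
      n * eval (Q τ) f * (eval (Q τ) (pderiv 0 Δ) * x + eval (Q τ) (pderiv 1 Δ) * y) =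
      eval (Q τ) Δ ^ 2 * eval (Q τ) f) :
    HasDerivAt (fun τ => eval (Q τ) f / (eval (Q τ) Δ * τ)) 0 τ := by
  have hf := hasDerivAt_eval_comp f Q Q' τ hQ
  have hd := hasDerivAt_eval_comp Δ Q Q' τ hQ
  refine (hf.div (hd.mul (hasDerivAt_id τ)) (mul_ne_zero hΔ hτ)).congr_deriv ?_
  rw [div_eq_zero_iff]
  left
  refine (mul_eq_zero.1 (?_ : eval (Q τ) Δ * _ = 0)).resolve_left hΔ
  simp only [Pi.mul_apply, id]
  linear_combination hid + (eval (Q τ) (pderiv 0 f) * eval (Q τ) Δ - eval (Q τ) (pderiv 0 Δ) * eval (Q τ) f) * h0 +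
    (eval (Q τ) (pderiv 1 f) * eval (Q τ) Δ - eval (Q τ) (pderiv 1 Δ) * eval (Q τ) f) * h1

lemma homogeneity (n : ℕ) (hn : 1 ≤ n) (H u v a b c : MvPolynomial (Fin 2) ℂ)
    (hu : pderiv 0 H = u) (hv : pderiv 1 H = v) (ha : pderiv 0 u = a) (hb : pderiv 1 u = b)
    (hc : pderiv 1 v = c)
    (I : C (n : ℂ) * ((u * c - v * b) * u + (v * a - u * b) * v) =
      C ((n : ℂ) + 1) * H * (a * c - b * b))
    (p : Fin 2 → ℂ) (hp : eval p (a * c - b * b) ≠ 0) (e : Fin 2 → ℂ)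
    (he0 : eval p (a * c - b * b) * e 0 = n * eval p (u * c - v * b))
    (he1 : eval p (a * c - b * b) * e 1 = n * eval p (v * a - u * b)) (τ : ℂ) :
    eval (fun i => p i - e i + τ * e i) u = τ ^ n * eval p u ∧
    eval (fun i => p i - e i + τ * e i) v = τ ^ n * eval p v := by
  have hv0 : pderiv 0 v = b := by rw [← hv, ← hb, ← hu, pderiv_comm']
  set Δ := a * c - b * b with hΔ
  set xp := u * c - v * b with hxp
  set yp := v * a - u * b with hyp
  let U : Bool → MvPolynomial (Fin 2) ℂ := fun t => if t then v else u
  let w0 : Bool → ℂ := fun t => eval p (U t)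
  obtain ⟨q, hq1, hq⟩ := local_lift U p (by
    simp only [U, if_true, ha, hb, hc, hv0, Bool.false_eq_true, if_false]
    simpa [hΔ] using hp) w0 1 (by intro t; simp [w0])
  have hn0 : (n : ℂ) ≠ 0 := by exact_mod_cast (by omega : n ≠ 0)
  let Q : ℂ → Fin 2 → ℂ := fun τ => q (τ ^ n)
  have hpow : Filter.Tendsto (fun τ : ℂ => τ ^ n) (nhds 1) (nhds 1) := by
    have : Continuous fun τ : ℂ => τ ^ n := by fun_prop
    simpa using this.tendsto 1
  have hqQ := hpow.eventually hq.eventually_nhds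
  have hQ1 : Q 1 = p := by simp [Q, hq1]
  have hQc : ContinuousAt Q 1 := by
    have h1 : ContinuousAt q (1 ^ n) := by
      simpa using hq.self_of_nhds.2.continuousAt
    exact ContinuousAt.comp (f := fun τ : ℂ => τ ^ n) (x := 1) h1 (by fun_prop)
  have hΔev : ∀ᶠ τ in nhds (1 : ℂ), eval (Q τ) Δ ≠ 0 := by
    have h1 : ContinuousAt (fun τ => eval (Q τ) Δ) 1 :=
      ContinuousAt.comp (f := Q) (x := 1) (MvPolynomial.continuous_eval Δ).continuousAt hQc
    exact h1.eventually_ne (by rwa [hQ1])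
  have hτev : ∀ᶠ τ in nhds (1 : ℂ), τ ≠ 0 := eventually_ne_nhds one_ne_zero
  have hmain : ∀ᶠ τ in nhds (1 : ℂ), τ ≠ 0 ∧ eval (Q τ) Δ ≠ 0 ∧
      (eval (Q τ) u = τ ^ n * eval p u ∧ eval (Q τ) v = τ ^ n * eval p v) ∧
      ∃ Q' : Fin 2 → ℂ, HasDerivAt Q Q' τ ∧ τ * eval (Q τ) Δ * Q' 0 = n * eval (Q τ) xp ∧
        τ * eval (Q τ) Δ * Q' 1 = n * eval (Q τ) yp := by
    filter_upwards [hqQ, hΔev, hτev] with τ h1 h2 h3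
    have h1' := h1.self_of_nhds
    have hU0 : eval (Q τ) u = τ ^ n * eval p u := h1'.1 false
    have hU1 : eval (Q τ) v = τ ^ n * eval p v := h1'.1 true
    refine ⟨h3, h2, ⟨hU0, hU1⟩, ?_⟩
    set q' := deriv q (τ ^ n) with hq'
    have hqd : HasDerivAt q q' (τ ^ n) := h1'.2.hasDerivAt
    have hder : ∀ t, eval (Q τ) (pderiv 0 (U t)) * q' 0 + eval (Q τ) (pderiv 1 (U t)) * q' 1 = w0 t := by
      intro t
      have k1 := hasDerivAt_eval_comp (U t) q q' (τ ^ n) hqd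
      have k2 : HasDerivAt (fun s : ℂ => s * w0 t) (w0 t) (τ ^ n) := by
        simpa using (hasDerivAt_id (τ ^ n)).mul_const (w0 t)
      have k3 : (fun s => eval (q s) (U t)) =ᶠ[nhds (τ ^ n)] fun s => s * w0 t := by
        filter_upwards [h1] with s hs
        exact hs.1 t
      exact k1.unique (k2.congr_of_eventuallyEq k3)
    have d0 : eval (Q τ) a * q' 0 + eval (Q τ) b * q' 1 = eval p u := by
      have := hder false
      simpa [U, w0, ha, hb] using this
    have d1 : eval (Q τ) b * q' 0 + eval (Q τ) c * q' 1 = eval p v := by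
      have := hder true
      simpa [U, w0, hv0, hc] using this
    have hτn : τ * τ ^ (n - 1) = τ ^ n := by
      rw [← pow_succ']
      congr 1
      omega
    refine ⟨((n : ℂ) * τ ^ (n - 1)) • q', ?_, ?_, ?_⟩
    · exact hqd.scomp τ (hasDerivAt_pow n τ)
    · simp only [Pi.smul_apply, smul_eq_mul, hΔ, hxp, map_sub, map_mul, hU0, hU1]
      linear_combination (n * (eval (Q τ) a * eval (Q τ) c - eval (Q τ) b * eval (Q τ) b) * q' 0) * hτn
        + n * τ ^ n * eval (Q τ) c * d0 - n * τ ^ n * eval (Q τ) b * d1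
    · simp only [Pi.smul_apply, smul_eq_mul, hΔ, hyp, map_sub, map_mul, hU0, hU1]
      linear_combination (n * (eval (Q τ) a * eval (Q τ) c - eval (Q τ) b * eval (Q τ) b) * q' 1) * hτn
        + n * τ ^ n * eval (Q τ) a * d1 - n * τ ^ n * eval (Q τ) b * d0
  have c0 : ∀ᶠ τ in nhds (1 : ℂ), n * (eval (Q τ) xp / (eval (Q τ) Δ * τ)) = e 0 := by
    have := eventually_const_of_deriv (fun τ => eval (Q τ) xp / (eval (Q τ) Δ * τ)) 1 (by
      filter_upwards [hmain] with τ hτ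
      obtain ⟨h1, h2, -, Q', h3, h4, h5⟩ := hτ
      exact deriv_quot_zero xp Δ Q Q' τ n _ _ h3 h1 h2 h4 h5
        (poly_identity n H u v a b c hu hv ha hb hc I (Q τ)).1)
    filter_upwards [this] with τ hτ
    rw [hτ, hQ1]
    field_simp
    linear_combination -he0
  have c1 : ∀ᶠ τ in nhds (1 : ℂ), n * (eval (Q τ) yp / (eval (Q τ) Δ * τ)) = e 1 := by
    have := eventually_const_of_deriv (fun τ => eval (Q τ) yp / (eval (Q τ) Δ * τ)) 1 (by
      filter_upwards [hmain] with τ hτ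
      obtain ⟨h1, h2, -, Q', h3, h4, h5⟩ := hτ
      exact deriv_quot_zero yp Δ Q Q' τ n _ _ h3 h1 h2 h4 h5
        (poly_identity n H u v a b c hu hv ha hb hc I (Q τ)).2)
    filter_upwards [this] with τ hτ
    rw [hτ, hQ1]
    field_simp
    linear_combination -he1
  have hQder : ∀ᶠ τ in nhds (1 : ℂ), HasDerivAt Q e τ := by
    filter_upwards [hmain, c0, c1] with τ hτ hc0 hc1
    obtain ⟨h1, h2, -, Q', h3, h4, h5⟩ := hτ
    have : Q' = e := by
      ext i
      fin_cases i
      · show Q' 0 = e 0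
        rw [← hc0]
        field_simp
        linear_combination h4
      · show Q' 1 = e 1
        rw [← hc1]
        field_simp
        linear_combination h5
    rwa [← this]
  have hQform : ∀ᶠ τ in nhds (1 : ℂ), ∀ i, Q τ i = p i - e i + τ * e i := by
    rw [Filter.eventually_all]
    intro i
    have := eventually_const_of_deriv (fun τ => Q τ i - τ * e i) 1 (by
      filter_upwards [hQder] with τ hτ
      have k1 := (hasDerivAt_pi.1 hτ) i
      refine (k1.sub ((hasDerivAt_id τ).mul_const (e i))).congr_deriv ?_
      simp)
    filter_upwards [this] with τ hτ
    rw [hQ1] at hτ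
    linear_combination hτ
  have final : ∀ g : MvPolynomial (Fin 2) ℂ, (∀ᶠ τ in nhds (1 : ℂ), eval (Q τ) g = τ ^ n * eval p g) →
      eval (fun i => p i - e i + τ * e i) g = τ ^ n * eval p g := by
    intro g hg
    let r : Polynomial ℂ := aeval (fun i => Polynomial.C (p i - e i) + Polynomial.X * Polynomial.C (e i)) g
      - Polynomial.X ^ n * Polynomial.C (eval p g)
    have hr : ∀ s : ℂ, r.eval s = eval (fun i => p i - e i + s * e i) g - s ^ n * eval p g := by
      intro s
      have : ((Polynomial.aeval s).comp (aeval (fun i => Polynomial.C (p i - e i) +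
          Polynomial.X * Polynomial.C (e i))) :
          MvPolynomial (Fin 2) ℂ →ₐ[ℂ] ℂ) = aeval (fun i => p i - e i + s * e i) := by
        apply MvPolynomial.algHom_ext
        intro i
        simp only [AlgHom.comp_apply, aeval_X, map_mul, map_add, Polynomial.aeval_C, Polynomial.aeval_X,
          Algebra.algebraMap_self, RingHom.id_apply]
      have h2 := congrArg (fun φ : MvPolynomial (Fin 2) ℂ →ₐ[ℂ] ℂ => φ g) this
      have h3 : Polynomial.eval s (aeval (fun i => Polynomial.C (p i - e i) +
          Polynomial.X * Polynomial.C (e i)) g) = eval (fun i => p i - e i + s * e i) g := h2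
      simp only [r, Polynomial.eval_sub, Polynomial.eval_mul, Polynomial.eval_pow, Polynomial.eval_X,
        Polynomial.eval_C, h3]
    have hr0 : r = 0 := by
      apply poly_eq_of_eventually r 1
      filter_upwards [hg, hQform] with s h1 h2
      rw [hr, ← h1, sub_eq_zero]
      congr 2
      ext i
      exact (h2 i).symm
    have := hr τ
    rw [hr0] at this
    simp only [Polynomial.eval_zero] at this
    linear_combination -this
  exact ⟨final u (hmain.mono fun τ h => h.2.2.1.1), final v (hmain.mono fun τ h => h.2.2.1.2)⟩


lemma exists_center (U : Bool → MvPolynomial (Fin 2) ℂ)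
    (hi : Algebra.IsIntegral (Algebra.adjoin ℂ (Set.range U)) (MvPolynomial (Fin 2) ℂ))
    (i : Fin 2) (Δ Y : MvPolynomial (Fin 2) ℂ) (hΔ : Δ ≠ 0)
    (h : ∀ p : Fin 2 → ℂ, eval p Δ ≠ 0 → ∃ z : Fin 2 → ℂ, (∀ b, eval z (U b) = 0) ∧
      eval p Δ * (p i - z i) = eval p Y) :
    ∃ r : ℂ, Δ * (X i - C r) = Y := by
  obtain ⟨P, hP, hPK, -, -⟩ := minpoly_package U hi (X i)
  have hroot : ∀ z : Fin 2 → ℂ, (∀ b, eval z (U b) = 0) → (P.map (eval 0)).IsRoot (z i) := by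
    intro z hz
    have h1 := congrArg (eval z) hPK
    rw [Polynomial.hom_eval₂, map_zero, eval_X] at h1
    have h2 : (eval z).comp (aeval U : MvPolynomial Bool ℂ →ₐ[ℂ] MvPolynomial (Fin 2) ℂ).toRingHom =
        eval 0 := by
      apply MvPolynomial.ringHom_ext
      · intro r
        simp [MvPolynomial.algebraMap_eq]
      · intro b
        simp [hz]
    rw [h2] at h1
    rw [Polynomial.IsRoot.def, Polynomial.eval_map]
    exact h1
  have hne : P.map (eval (0 : Bool → ℂ)) ≠ 0 := (hP.map _).ne_zero
  set S := (P.map (eval (0 : Bool → ℂ))).roots.toFinset with hS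
  have hprod : Δ * ∏ r ∈ S, (Δ * (X i - C r) - Y) = 0 := by
    apply MvPolynomial.funext
    intro p
    rw [map_mul, map_prod, map_zero]
    by_cases hp : eval p Δ = 0
    · rw [hp, zero_mul]
    · obtain ⟨z, hz, hz2⟩ := h p hp
      rw [mul_eq_zero]
      right
      refine Finset.prod_eq_zero (i := z i) ?_ ?_
      · rw [hS, Multiset.mem_toFinset, Polynomial.mem_roots hne]
        exact hroot z hz
      · simp only [map_sub, map_mul, eval_X, eval_C, hz2, sub_self]
  obtain ⟨r, -, hr⟩ := Finset.prod_eq_zero_iff.1 ((mul_eq_zero.1 hprod).resolve_left hΔ)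
  exact ⟨r, sub_eq_zero.1 hr⟩

lemma unique_crit (n : ℕ) (hn : 1 ≤ n) (H : MvPolynomial (Fin 2) ℂ) (hdeg : H.totalDegree ≤ n + 1)
    (hz0 : ∀ z : Fin 2 → ℂ, eval z (pderiv 0 (homogeneousComponent (n + 1) H)) = 0 →
      eval z (pderiv 1 (homogeneousComponent (n + 1) H)) = 0 → z = 0)
    (hcrit0 : ∀ z : Fin 2 → ℂ, eval z (pderiv 0 H) = 0 → eval z (pderiv 1 H) = 0 → eval z H = 0) :
    ∃ c : Fin 2 → ℂ, (eval c (pderiv 0 H) = 0 ∧ eval c (pderiv 1 H) = 0) ∧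
      ∀ z : Fin 2 → ℂ, eval z (pderiv 0 H) = 0 → eval z (pderiv 1 H) = 0 → z = c := by
  set u := pderiv 0 H with hu
  set v := pderiv 1 H with hv
  let U : Bool → MvPolynomial (Fin 2) ℂ := fun t => if t then v else u
  have hU : ∀ b, (U b).totalDegree ≤ n := by
    intro b
    cases b
    · exact totalDegree_pderiv_le' n 0 H hdeg
    · exact totalDegree_pderiv_le' n 1 H hdeg
  have hz : ∀ z : Fin 2 → ℂ, (∀ b, eval z (homogeneousComponent n (U b)) = 0) → z = 0 := by
    intro z h
    apply hz0 z
    · rw [← hc_pderiv]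
      exact h false
    · rw [← hc_pderiv]
      exact h true
  have hi := integral_aeval n hn U hU hz
  have hv0 : pderiv 0 v = pderiv 1 u := pderiv_comm' _ _ _
  have hI := main_identity n hn H hdeg U rfl rfl hU hz (fun z h => hcrit0 z (h false) (h true))
  have hΔ := jac_ne_zero U hi
  simp only [U, if_true, Bool.false_eq_true, if_false, hv0] at hI hΔ
  set a := pderiv 0 u with ha
  set b := pderiv 1 u with hb
  set c := pderiv 1 v with hc
  set Δ := a * c - b * b with hΔd
  have hom := homogeneity n hn H u v a b c rfl rfl rfl rfl rfl hI
  have hn0 : n ≠ 0 := by omega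
  -- the point depending on `p`
  have hpt : ∀ p : Fin 2 → ℂ, eval p Δ ≠ 0 → ∃ z : Fin 2 → ℂ, (∀ t, eval z (U t) = 0) ∧
      eval p Δ * (p 0 - z 0) = eval p (C (n : ℂ) * (u * c - v * b)) ∧
      eval p Δ * (p 1 - z 1) = eval p (C (n : ℂ) * (v * a - u * b)) := by
    intro p hp
    let e : Fin 2 → ℂ := ![n * eval p (u * c - v * b) / eval p Δ, n * eval p (v * a - u * b) / eval p Δ]
    have he0 : eval p Δ * e 0 = n * eval p (u * c - v * b) := by
      simp only [e, Matrix.cons_val_zero]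
      field_simp
    have he1 : eval p Δ * e 1 = n * eval p (v * a - u * b) := by
      simp only [e, Matrix.cons_val_one, Matrix.cons_val_fin_one]
      field_simp
    have := hom p hp e he0 he1 0
    refine ⟨fun i => p i - e i, ?_, ?_, ?_⟩
    · intro t
      cases t
      · simpa [U, hn0] using this.1
      · simpa [U, hn0] using this.2
    · rw [map_mul, eval_C, ← he0]
      ring
    · rw [map_mul, eval_C, ← he1]
      ring
  obtain ⟨r0, hr0⟩ := exists_center U hi 0 Δ _ hΔ fun p hp => by
    obtain ⟨z, h1, h2, h3⟩ := hpt p hp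
    exact ⟨z, h1, h2⟩
  obtain ⟨r1, hr1⟩ := exists_center U hi 1 Δ _ hΔ fun p hp => by
    obtain ⟨z, h1, h2, h3⟩ := hpt p hp
    exact ⟨z, h1, h3⟩
  let o : Fin 2 → ℂ := ![r0, r1]
  have homo : ∀ (τ : ℂ) (p : Fin 2 → ℂ), eval (fun i => o i + τ * (p i - o i)) u = τ ^ n * eval p u ∧
      eval (fun i => o i + τ * (p i - o i)) v = τ ^ n * eval p v := by
    intro τ
    have hcont : ∀ f : MvPolynomial (Fin 2) ℂ, Continuous fun z : Fin 2 → ℂ => eval z f :=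
      fun f => MvPolynomial.continuous_eval f
    have hline : Continuous fun p : Fin 2 → ℂ => fun i => o i + τ * (p i - o i) := by fun_prop
    have hcl : IsClosed {p : Fin 2 → ℂ | eval (fun i => o i + τ * (p i - o i)) u = τ ^ n * eval p u ∧
        eval (fun i => o i + τ * (p i - o i)) v = τ ^ n * eval p v} := by
      refine IsClosed.inter (isClosed_eq ((hcont u).comp hline) (continuous_const.mul (hcont u)))
        (isClosed_eq ((hcont v).comp hline) (continuous_const.mul (hcont v)))
    intro p
    have hsub : {z : Fin 2 → ℂ | eval z Δ ≠ 0} ⊆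
        {p : Fin 2 → ℂ | eval (fun i => o i + τ * (p i - o i)) u = τ ^ n * eval p u ∧
        eval (fun i => o i + τ * (p i - o i)) v = τ ^ n * eval p v} := by
      intro p hp
      have := hom p hp (fun i => p i - o i) (by
        have := congrArg (eval p) hr0
        simpa [o, hΔd] using this) (by
        have := congrArg (eval p) hr1
        simpa [o, hΔd] using this) τ
      simpa using this
    exact (hcl.closure_subset_iff.2 hsub) (dense_ne_zero Δ hΔ p)
  obtain ⟨C0, hC0, hprop⟩ := proper_bound n hn U hU hz
  refine ⟨o, ?_, ?_⟩
  · have := homo 0 o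
    simpa [hn0] using this
  · intro z hz1 hz2
    by_contra hne
    have hb : ∀ τ : ℂ, ‖fun i => o i + τ * (z i - o i)‖ ≤ C0 := by
      intro τ
      have h1 := hprop (fun i => o i + τ * (z i - o i))
      have h2 : (fun t => eval (fun i => o i + τ * (z i - o i)) (U t)) = 0 := by
        ext t
        have := homo τ z
        rw [hz1, hz2, mul_zero] at this
        cases t
        · exact this.1
        · exact this.2
      rw [h2, norm_zero, add_zero, mul_one] at h1
      exact (((le_max_right 1 _).trans (le_self_pow₀ (le_max_left _ _) hn0))).trans h1
    obtain ⟨i, hi⟩ := Function.ne_iff.1 hne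
    have hi' : z i - o i ≠ 0 := sub_ne_zero.2 hi
    have h1 := (norm_le_pi_norm _ i).trans (hb ((C0 + 1 - o i) / (z i - o i)))
    simp only [div_mul_cancel₀ _ hi'] at h1
    have h2 : o i + ((C0 : ℂ) + 1 - o i) = ((C0 + 1 : ℝ) : ℂ) := by
      push_cast
      ring
    rw [h2, Complex.norm_real, Real.norm_of_nonneg (by linarith)] at h1
    linarith


/-- Lemma: one critical value implies one critical point.
A polynomial `H` of degree `n+1` regular at infinity having only one complex
critical value `γ` has a unique critical point. -/
theorem stmt11 (n : ℕ) (hn : 1 ≤ n) (H : MvPolynomial (Fin 2) ℂ)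
    (hdeg : H.totalDegree = n + 1) (hreg : RegularAtInfinity n H)
    (γ : ℂ)
    (honeval : ∀ x₀ y₀ : ℂ, eval ![x₀, y₀] (pderiv 0 H) = 0 →
      eval ![x₀, y₀] (pderiv 1 H) = 0 → eval ![x₀, y₀] H = γ) :
    ∃! z : ℂ × ℂ,
      eval ![z.1, z.2] (pderiv 0 H) = 0 ∧ eval ![z.1, z.2] (pderiv 1 H) = 0 := by
  have hvec : ∀ z : Fin 2 → ℂ, ![z 0, z 1] = z := by
    intro z
    ext i
    fin_cases i <;> rfl
  have hp : ∀ i, pderiv i (H - C γ) = pderiv i H := by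
    intro i
    simp
  have hh : homogeneousComponent (n + 1) (H - C γ) = homogeneousComponent (n + 1) H := by
    rw [map_sub, homogeneousComponent_eq_zero (n + 1) (C γ) (by rw [totalDegree_C]; omega), sub_zero]
  obtain ⟨c, ⟨hc0, hc1⟩, huniq⟩ := unique_crit n hn (H - C γ)
    ((totalDegree_sub _ _).trans (max_le hdeg.le (by rw [totalDegree_C]; omega)))
    (by
      intro z h0 h1
      rw [hh, ← hvec z] at h0 h1
      obtain ⟨k0, k1⟩ := hreg _ _ h0 h1
      ext i
      fin_cases i
      · exact k0
      · exact k1)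
    (by
      intro z h0 h1
      rw [hp] at h0 h1
      rw [← hvec z] at h0 h1
      have := honeval _ _ h0 h1
      rw [hvec z] at this
      rw [map_sub, eval_C, this, sub_self])
  simp only [hp] at hc0 hc1 huniq
  refine ⟨(c 0, c 1), ?_, ?_⟩
  · simp only [hvec]
    exact ⟨hc0, hc1⟩
  · rintro ⟨x, y⟩ ⟨h0, h1⟩
    have := huniq ![x, y] h0 h1
    rw [← this]
    rfl
end

section
/- Let n ≥ 1 and let H ∈ ℂ[x,y] be a polynomial of degree n+1 that is regular at infinity, with H(0,0) = 0. If the origin (0,0) is the only critical point of H in ℂ², then H is homogeneous: H coincides with its principal homogeneous part Ĥ. -/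
open MvPolynomial Finset

lemma aux_td (p : MvPolynomial (Fin 2) ℂ) (d : ℕ) :
    p.totalDegree ≤ d ↔ ∀ m, coeff m p ≠ 0 → m 0 + m 1 ≤ d := by
  unfold totalDegree
  rw [Finset.sup_le_iff]
  refine forall_congr' fun m => ?_
  rw [mem_support_iff, Finsupp.sum_fintype _ _ (fun _ => rfl), Fin.sum_univ_two]

lemma aux_degree (m : Fin 2 →₀ ℕ) : m.degree = m 0 + m 1 := by
  rw [Finsupp.degree_eq_sum, Fin.sum_univ_two]

lemma aux_tdeg_pderiv {p : MvPolynomial (Fin 2) ℂ} {d : ℕ} (i : Fin 2)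
    (h : p.totalDegree ≤ d + 1) : (pderiv i p).totalDegree ≤ d := by
  rw [aux_td] at *
  intro m hm
  rw [coeff_pderiv] at hm
  have := h _ (left_ne_zero_of_mul hm)
  fin_cases i <;> simp at this <;> omega

lemma aux_coeff_euler (p : MvPolynomial (Fin 2) ℂ) (i : Fin 2) (m : Fin 2 →₀ ℕ) :
    coeff m (X i * pderiv i p) = m i * coeff m p := by
  rw [coeff_X_mul']
  split_ifs with h
  · rw [coeff_pderiv]
    have h2 : m i ≠ 0 := by simpa using h
    have : Finsupp.single i 1 ≤ m := by
      simpa [Nat.one_le_iff_ne_zero] using h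
    rw [tsub_add_cancel_of_le this, mul_comm]
    congr 1
    simp only [Finsupp.coe_tsub, Pi.sub_apply, Finsupp.single_eq_same]
    rw [Nat.cast_sub (by omega)]; simp
  · simp at h; simp [h]

/-- The Euler defect. -/
noncomputable def auxE (n : ℕ) (H : MvPolynomial (Fin 2) ℂ) : MvPolynomial (Fin 2) ℂ :=
  C ((n : ℂ) + 1) * H - X 0 * pderiv 0 H - X 1 * pderiv 1 H

lemma aux_coeff_E (n : ℕ) (H : MvPolynomial (Fin 2) ℂ) (m : Fin 2 →₀ ℕ) :
    coeff m (auxE n H) = ((n : ℂ) + 1 - (m 0 + m 1 : ℕ)) * coeff m H := by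
  unfold auxE
  rw [coeff_sub, coeff_sub, coeff_C_mul, aux_coeff_euler, aux_coeff_euler]
  push_cast; ring

lemma aux_E_deg (n : ℕ) (H : MvPolynomial (Fin 2) ℂ) (hH : H.totalDegree ≤ n + 1) :
    (auxE n H).totalDegree ≤ n := by
  rw [aux_td] at *
  intro m hm
  rw [aux_coeff_E] at hm
  have h1 := hH m (right_ne_zero_of_mul hm)
  have h2 := left_ne_zero_of_mul hm
  rcases Nat.lt_or_ge n (m 0 + m 1) with h | h
  · exfalso; apply h2
    have : m 0 + m 1 = n + 1 := by omega
    rw [this]; push_cast; ring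
  · exact h

lemma aux_E_zero (n : ℕ) (H : MvPolynomial (Fin 2) ℂ) (hE : auxE n H = 0) :
    H = homogeneousComponent (n + 1) H := by
  ext m
  rw [coeff_homogeneousComponent]
  split_ifs with h
  · rfl
  · have := aux_coeff_E n H m
    rw [hE, coeff_zero] at this
    rcases mul_eq_zero.1 this.symm with h1 | h1
    · exfalso; apply h
      rw [aux_degree]
      have : ((m 0 + m 1 : ℕ) : ℂ) = ((n + 1 : ℕ) : ℂ) := by
        push_cast; push_cast at h1; linear_combination -h1
      exact_mod_cast this
    · exact h1

lemma aux_hc_mul (p g : MvPolynomial (Fin 2) ℂ) (n N : ℕ) (hg : g.IsHomogeneous n) (h : n ≤ N) :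
    homogeneousComponent N (p * g) = homogeneousComponent (N - n) p * g := by
  let : GradedAlgebra (homogeneousSubmodule (Fin 2) ℂ) := gradedAlgebra
  have := DirectSum.coe_decompose_mul_of_right_mem_of_le
    (homogeneousSubmodule (Fin 2) ℂ) (a := p) (b := g) (n := N) (i := n) hg h
  rw [← decomposition.decompose'_apply, ← decomposition.decompose'_apply]
  exact this

/-- Data expressing that `f`, `g` have degree `n` with coprime leading forms. -/
structure AuxPow (n N : ℕ) (f g : MvPolynomial (Fin 2) ℂ) (i : Fin 2) : Prop where
  ex : ∃ p q r : MvPolynomial (Fin 2) ℂ, X i ^ N = p * f + q * g + r ∧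
    p.totalDegree + n ≤ N ∧ q.totalDegree + n ≤ N ∧ r.totalDegree + 1 ≤ N

lemma aux_pow (n : ℕ) (f g fh gh : MvPolynomial (Fin 2) ℂ)
    (hfh : fh.IsHomogeneous n) (hgh : gh.IsHomogeneous n)
    (hf : (f - fh).totalDegree + 1 ≤ n) (hg : (g - gh).totalDegree + 1 ≤ n)
    (hz : ∀ v : Fin 2 → ℂ, eval v fh = 0 → eval v gh = 0 → v = 0) (i : Fin 2) :
    ∃ N0, ∀ N, N0 ≤ N → AuxPow n N f g i := by
  have hX : (X i : MvPolynomial (Fin 2) ℂ) ∈ (Ideal.span {fh, gh}).radical := by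
    rw [← vanishingIdeal_zeroLocus_eq_radical (K := ℂ), zeroLocus_span, mem_vanishingIdeal_iff]
    intro v hv
    have h1 := hv fh (by simp)
    have h2 := hv gh (by simp)
    have := hz v (by simpa [aeval_eq_eval] using h1) (by simpa [aeval_eq_eval] using h2)
    simp [this]
  obtain ⟨N1, hN1⟩ := hX
  refine ⟨N1 + n, fun N hN => ⟨?_⟩⟩
  have hmem : (X i : MvPolynomial (Fin 2) ℂ) ^ N ∈ Ideal.span {fh, gh} := by
    obtain ⟨k, rfl⟩ := Nat.exists_eq_add_of_le (show N1 ≤ N by omega)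
    rw [pow_add]; exact Ideal.mul_mem_right _ _ hN1
  obtain ⟨a, b, hab⟩ := Ideal.mem_span_pair.1 hmem
  have hab2 := congrArg (homogeneousComponent N) hab
  rw [map_add, aux_hc_mul _ _ _ _ hfh (by omega), aux_hc_mul _ _ _ _ hgh (by omega),
    homogeneousComponent_eq_self (isHomogeneous_X_pow i N)] at hab2
  set p := homogeneousComponent (N - n) a with hp
  set q := homogeneousComponent (N - n) b with hq
  have hpd : p.totalDegree ≤ N - n := (homogeneousComponent_isHomogeneous _ _).totalDegree_le
  have hqd : q.totalDegree ≤ N - n := (homogeneousComponent_isHomogeneous _ _).totalDegree_le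
  refine ⟨p, q, -(p * (f - fh) + q * (g - gh)), ?_, by omega, by omega, ?_⟩
  · rw [← hab2]; ring
  · rw [totalDegree_neg]
    have h1 := totalDegree_add (p * (f - fh)) (q * (g - gh))
    have h2 := totalDegree_mul p (f - fh)
    have h3 := totalDegree_mul q (g - gh)
    rcases le_max_iff.1 h1 with h | h <;> omega


lemma aux_integral (n N : ℕ) (hn : 1 ≤ n) (f g : MvPolynomial (Fin 2) ℂ)
    (h : ∀ i, AuxPow n N f g i) :
    Algebra.IsIntegral (Algebra.adjoin ℂ (Set.range ![f, g])) (MvPolynomial (Fin 2) ℂ) := by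
  set S := Algebra.adjoin ℂ (Set.range ![f, g]) with hS
  have hfS : f ∈ S := Algebra.subset_adjoin ⟨0, rfl⟩
  have hgS : g ∈ S := Algebra.subset_adjoin ⟨1, rfl⟩
  let T : Set (MvPolynomial (Fin 2) ℂ) :=
    (fun m => monomial m (1 : ℂ)) '' {m : Fin 2 →₀ ℕ | m.degree ≤ 2 * N}
  have hT : T.Finite := (Finsupp.finite_of_degree_le _).image _
  let M : Submodule S (MvPolynomial (Fin 2) ℂ) := Submodule.span S T
  have hmulS : ∀ s ∈ S, ∀ p ∈ M, p * s ∈ M := by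
    intro s hs p hp
    have := M.smul_mem ⟨s, hs⟩ hp
    rw [Subalgebra.smul_def] at this
    simpa [mul_comm] using this
  have key : ∀ d : ℕ, ∀ p : MvPolynomial (Fin 2) ℂ, p.totalDegree < d → p ∈ M := by
    intro d
    induction d with
    | zero => intro p hp; omega
    | succ d ih =>
      intro p hp
      rw [p.as_sum]
      refine Submodule.sum_mem _ fun m hm => ?_
      have hmd := (aux_td p d).1 (by omega) m (by simpa using hm)
      have hC : C (coeff m p) ∈ S := S.algebraMap_mem _
      have : monomial m (coeff m p) = monomial m 1 * C (coeff m p) := by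
        rw [mul_comm, C_mul_monomial, mul_one]
      rw [this]
      refine hmulS _ hC _ ?_
      by_cases hsmall : m 0 + m 1 ≤ 2 * N
      · exact Submodule.subset_span ⟨m, by simpa [aux_degree] using hsmall, rfl⟩
      · have : ∃ i, N ≤ m i := by
          by_contra hcon
          push Not at hcon
          have h0 := hcon 0
          have h1 := hcon 1
          omega
        obtain ⟨i, hi⟩ := this
        obtain ⟨p', q', r', he, h1, h2, h3⟩ := (h i).ex
        have hsplit : m = (m - Finsupp.single i N) + Finsupp.single i N := by
          rw [tsub_add_cancel_of_le]
          simpa using hi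
        set m' := m - Finsupp.single i N with hm'
        have hm'd : m' 0 + m' 1 + N = m 0 + m 1 := by
          rw [hsplit]
          fin_cases i <;> simp <;> omega
        have hmon : (monomial m' (1 : ℂ)).totalDegree ≤ m' 0 + m' 1 := by
          rw [aux_td]
          intro k hk
          rw [coeff_monomial] at hk
          have : m' = k := by by_contra hh; simp [hh] at hk
          rw [this]
        have : monomial m (1 : ℂ) = monomial m' 1 * p' * f + monomial m' 1 * q' * g
            + monomial m' 1 * r' := by
          conv_lhs => rw [hsplit, ← mul_one (1 : ℂ), ← monomial_mul, ← X_pow_eq_monomial, he]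
          ring
        rw [this]
        have hd : ∀ s : MvPolynomial (Fin 2) ℂ, s.totalDegree + 1 ≤ N → monomial m' (1 : ℂ) * s ∈ M := by
          intro s hs
          apply ih
          have := totalDegree_mul (monomial m' (1 : ℂ)) s
          omega
        exact M.add_mem (M.add_mem (hmulS _ hfS _ (hd _ (by omega)))
          (hmulS _ hgS _ (hd _ (by omega)))) (hd _ h3)
  have : Module.Finite S (MvPolynomial (Fin 2) ℂ) := by
    refine ⟨(Submodule.fg_def).2 ⟨T, hT, ?_⟩⟩
    rw [eq_top_iff]
    intro p _
    exact key (p.totalDegree + 1) p (by omega)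
  infer_instance

lemma aux_inj (f g : MvPolynomial (Fin 2) ℂ)
    (h : Algebra.IsIntegral (Algebra.adjoin ℂ (Set.range ![f, g])) (MvPolynomial (Fin 2) ℂ)) :
    Function.Injective (aeval ![f, g] : MvPolynomial (Fin 2) ℂ →ₐ[ℂ] MvPolynomial (Fin 2) ℂ) := by
  have : IsTranscendenceBasis ℂ ![f, g] := by
    have := h.isAlgebraic
    apply Algebra.IsAlgebraic.isTranscendenceBasis_of_lift_le_trdeg_of_finite
    rw [MvPolynomial.trdeg_of_isDomain]
    simp
  exact this.1

lemma aux_isIntegral (f g : MvPolynomial (Fin 2) ℂ)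
    (h : Algebra.IsIntegral (Algebra.adjoin ℂ (Set.range ![f, g])) (MvPolynomial (Fin 2) ℂ)) :
    (aeval ![f, g] : MvPolynomial (Fin 2) ℂ →ₐ[ℂ] MvPolynomial (Fin 2) ℂ).toRingHom.IsIntegral := by
  rw [Algebra.adjoin_range_eq_range_aeval] at h
  set φ := (aeval ![f, g] : MvPolynomial (Fin 2) ℂ →ₐ[ℂ] MvPolynomial (Fin 2) ℂ) with hφ
  have h1 : (φ.rangeRestrict.toRingHom).IsIntegral :=
    RingHom.isIntegral_of_surjective _ φ.rangeRestrict_surjective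
  have h2 : (algebraMap φ.range (MvPolynomial (Fin 2) ℂ)).IsIntegral := fun x => h.isIntegral x
  exact h1.trans _ _ h2

lemma aux_minpoly {A B : Type*} [CommRing A] [IsDomain A] [CommRing B] [IsDomain B]
    [IsIntegrallyClosed B] (φ : B →+* A) (hinj : Function.Injective φ) (hint : φ.IsIntegral)
    (E : A) (hE : E ≠ 0) :
    ∃ M : Polynomial B, M.Monic ∧ M.coeff 0 ≠ 0 ∧ M.eval₂ φ E = 0 ∧ ∀ (ψ : B →+* ℂ)
      (_ : Function.Surjective ψ) (r : ℂ),
      (M.map ψ).IsRoot r → ∃ Q : Ideal A, Q.IsMaximal ∧ (∀ b, ψ b = 0 → φ b ∈ Q) ∧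
        (∀ b, ψ b = r → E - φ b ∈ Q) := by
  let := φ.toAlgebra
  have : Module.IsTorsionFree B A := by
    exact (Module.isTorsionFree_iff_algebraMap_injective).2 hinj
  have : Algebra.IsIntegral B A := ⟨hint⟩
  have hEi : IsIntegral B E := hint E
  refine ⟨minpoly B E, minpoly.monic hEi, ?_, minpoly.aeval B E, ?_⟩
  · intro h0
    have hX := Polynomial.divX_mul_X_add (minpoly B E)
    rw [h0, map_zero, add_zero] at hX
    have hmon : (minpoly B E).divX.Monic := by
      have := minpoly.monic hEi
      rw [← hX] at this
      exact Polynomial.Monic.of_mul_monic_right Polynomial.monic_X this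
    have h1 := minpoly.aeval B E
    rw [← hX, map_mul, Polynomial.aeval_X] at h1
    have h2 := (mul_eq_zero.1 h1).resolve_right hE
    have h3 := Polynomial.natDegree_le_natDegree (minpoly.min B E hmon h2)
    rw [Polynomial.natDegree_divX_eq_natDegree_tsub_one] at h3
    have := minpoly.natDegree_pos hEi
    omega
  · intro ψ hψ r hr
    let χ : AdjoinRoot (minpoly B E) →+* ℂ := AdjoinRoot.lift ψ r (by
      rw [← Polynomial.eval_map]; exact hr)
    let e := minpoly.equivAdjoin hEi
    let χ' : Algebra.adjoin B ({E} : Set A) →+* ℂ := χ.comp e.symm.toRingEquiv.toRingHom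
    have hχb : ∀ b, χ' (algebraMap B _ b) = ψ b := by
      intro b
      show χ (e.symm _) = _
      have : e.symm (algebraMap B (Algebra.adjoin B ({E} : Set A)) b)
        = AdjoinRoot.of (minpoly B E) b := e.symm.commutes b
      rw [this]; simp [χ]
    have hχE : χ' ⟨E, Algebra.self_mem_adjoin_singleton B E⟩ = r := by
      show χ (e.symm _) = _
      have : e.symm (⟨E, Algebra.self_mem_adjoin_singleton B E⟩ : Algebra.adjoin B ({E} : Set A))
        = AdjoinRoot.root (minpoly B E) := by
          have : e (AdjoinRoot.root (minpoly B E)) = ⟨E, Algebra.self_mem_adjoin_singleton B E⟩ := by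
            simp [e]
          rw [← this]; exact e.symm_apply_apply _
      rw [this]; simp [χ]
    have hsurj : Function.Surjective χ' := fun c => by
      obtain ⟨b, rfl⟩ := hψ c
      exact ⟨_, hχb b⟩
    have : (RingHom.ker χ').IsMaximal := RingHom.ker_isMaximal_of_surjective χ' hsurj
    have : Algebra.IsIntegral (Algebra.adjoin B ({E} : Set A)) A := 
      Algebra.IsIntegral.tower_top B
    obtain ⟨Q, hQ, hQ2⟩ := Ideal.exists_ideal_over_maximal_of_isIntegral (S := A) (RingHom.ker χ') (by
      rw [(RingHom.injective_iff_ker_eq_bot _).1]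
      · exact bot_le
      · exact Subtype.val_injective)
    refine ⟨Q, hQ, ?_, ?_⟩
    · intro b hb
      have : algebraMap B (Algebra.adjoin B ({E} : Set A)) b ∈ RingHom.ker χ' := by
        rw [RingHom.mem_ker, hχb, hb]
      rw [← hQ2] at this
      exact this
    · intro b hb
      have : (⟨E, Algebra.self_mem_adjoin_singleton B E⟩ : Algebra.adjoin B ({E} : Set A))
          - algebraMap B (Algebra.adjoin B ({E} : Set A)) b ∈ RingHom.ker χ' := by
        rw [RingHom.mem_ker, map_sub, hχE, hχb, hb, sub_self]
      rw [← hQ2] at this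
      exact this

lemma aux_deriv {A B : Type*} [CommRing A] [IsDomain A] [CommRing B] [Algebra ℂ A]
    [Algebra ℂ B] (φ : B →ₐ[ℂ] A) (hint : φ.toRingHom.IsIntegral)
    (D : Derivation ℂ A A) (hD : ∀ b, D (φ b) = 0) (E : A) : D E = 0 := by
  let := φ.toRingHom.toAlgebra
  have htower : IsScalarTower ℂ B A := IsScalarTower.of_algebraMap_eq' (φ.comp_algebraMap).symm
  let D' : Derivation B A A := Derivation.mk' ⟨⟨D, D.map_add⟩, fun b a => by
    show D (φ b * a) = φ b * D a
    simp [hD]⟩ (fun a b => by simp)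
  have hEi : IsIntegral B E := hint E
  have h0 : Polynomial.aeval E (Polynomial.derivative (minpoly B E)) * D E = 0 := by
    have := D'.map_aeval (minpoly B E) E
    rw [minpoly.aeval, map_zero] at this
    exact this.symm
  rcases mul_eq_zero.1 h0 with h | h
  · exfalso
    have hm := minpoly.monic hEi
    set d := (minpoly B E).natDegree with hd
    have hnt : Nontrivial B := φ.toRingHom.domain_nontrivial
    have hd0 : d ≠ 0 := (minpoly.natDegree_pos hEi).ne'
    let P := Polynomial.C (algebraMap ℂ B (d : ℂ)⁻¹) * Polynomial.derivative (minpoly B E)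
    have hc : P.coeff (d - 1) = 1 := by
      simp only [P, Polynomial.coeff_C_mul, Polynomial.coeff_derivative]
      rw [Nat.sub_add_cancel (by omega), hd, Polynomial.coeff_natDegree, hm.leadingCoeff, ← hd, one_mul]
      have : ((d - 1 : ℕ) : B) + 1 = algebraMap ℂ B d := by
        rw [map_natCast, ← Nat.cast_succ]; congr 1; omega
      rw [this, ← map_mul, inv_mul_cancel₀ (by exact_mod_cast hd0), map_one]
    have hdeg : P.natDegree ≤ d - 1 :=
      (Polynomial.natDegree_C_mul_le _ _).trans (Polynomial.natDegree_derivative_le _)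
    have hmon : P.Monic := Polynomial.monic_of_natDegree_le_of_coeff_eq_one _ hdeg hc
    have hPE : Polynomial.aeval E P = 0 := by simp [P, h]
    have := minpoly.min B E hmon hPE
    have := Polynomial.natDegree_le_natDegree this
    omega
  · exact h

lemma aux_hess (f g : MvPolynomial (Fin 2) ℂ)
    (hint : (aeval ![f, g] : MvPolynomial (Fin 2) ℂ →ₐ[ℂ] MvPolynomial (Fin 2) ℂ).toRingHom.IsIntegral) :
    pderiv 0 f * pderiv 1 g - pderiv 1 f * pderiv 0 g ≠ 0 := by
  intro h0
  have key : ∀ a b : MvPolynomial (Fin 2) ℂ, a * pderiv 0 f + b * pderiv 1 f = 0 →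
      a * pderiv 0 g + b * pderiv 1 g = 0 → a = 0 ∧ b = 0 := by
    intro a b h1 h2
    let D : Derivation ℂ (MvPolynomial (Fin 2) ℂ) (MvPolynomial (Fin 2) ℂ) :=
      a • pderiv 0 + b • pderiv 1
    have hD : ∀ p : MvPolynomial (Fin 2) ℂ, D (aeval ![f, g] p) = 0 := by
      intro p
      induction p using MvPolynomial.induction_on with
      | C c => 
        rw [← algebraMap_eq, AlgHom.commutes]; exact D.map_algebraMap c
      | add p q hp hq => rw [map_add, map_add, hp, hq, add_zero]
      | mul_X p i hp =>
        rw [map_mul, aeval_X, D.leibniz, hp]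
        have : D (![f, g] i) = 0 := by
          fin_cases i
          · simpa [D] using h1
          · simpa [D] using h2
        simp [this]
    have hx := aux_deriv _ hint D hD (X 0)
    have hy := aux_deriv _ hint D hD (X 1)
    constructor
    · simpa [D, pderiv_X] using hx
    · simpa [D, pderiv_X] using hy
  have k1 := key (pderiv 1 f) (-pderiv 0 f) (by ring) (by linear_combination -h0)
  have k2 := key (pderiv 1 g) (-pderiv 0 g) (by linear_combination h0) (by ring)
  have k3 := key 1 0 (by have := k1.2; simp at this; simp [this]) (by have := k2.2; simp at this; simp [this])
  exact one_ne_zero k3.1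


lemma aux_bound (p : MvPolynomial (Fin 2) ℂ) (d : ℕ) (hp : p.totalDegree ≤ d) :
    ∃ K : ℝ, 0 ≤ K ∧ ∀ v : Fin 2 → ℂ, ‖eval v p‖ ≤ K * (max 1 ‖v‖) ^ d := by
  refine ⟨∑ m ∈ p.support, ‖coeff m p‖, Finset.sum_nonneg fun _ _ => norm_nonneg _, fun v => ?_⟩
  rw [eval_eq', Finset.sum_mul]
  refine (norm_sum_le _ _).trans (Finset.sum_le_sum fun m hm => ?_)
  rw [norm_mul]
  refine mul_le_mul_of_nonneg_left ?_ (norm_nonneg _)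
  rw [Fin.prod_univ_two, norm_mul, norm_pow, norm_pow]
  have h0 : ‖v 0‖ ≤ max 1 ‖v‖ := (norm_le_pi_norm v 0).trans (le_max_right _ _)
  have h1 : ‖v 1‖ ≤ max 1 ‖v‖ := (norm_le_pi_norm v 1).trans (le_max_right _ _)
  calc ‖v 0‖ ^ m 0 * ‖v 1‖ ^ m 1 ≤ (max 1 ‖v‖) ^ m 0 * (max 1 ‖v‖) ^ m 1 := by gcongr
    _ = (max 1 ‖v‖) ^ (m 0 + m 1) := (pow_add _ _ _).symm
    _ ≤ _ := pow_le_pow_right₀ (le_max_left _ _)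
      ((aux_td p d).1 hp m (by simpa using hm))

/-- The polynomial map with components `f`, `g`. -/
noncomputable def auxG (f g : MvPolynomial (Fin 2) ℂ) (v : Fin 2 → ℂ) : Fin 2 → ℂ :=
  ![eval v f, eval v g]

lemma aux_proper1 (n N : ℕ) (f g : MvPolynomial (Fin 2) ℂ) (i : Fin 2)
    (h : AuxPow n N f g i) : ∃ K R : ℝ, 0 ≤ K ∧ 1 ≤ R ∧ ∀ v : Fin 2 → ℂ, ‖v i‖ = ‖v‖ →
      R ≤ ‖v‖ → ‖v‖ ^ n ≤ K * ‖auxG f g v‖ := by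
  obtain ⟨p, q, r, he, hp, hq, hr⟩ := h.ex
  obtain ⟨Kp, hKp0, hKp⟩ := aux_bound p (N - n) (by omega)
  obtain ⟨Kq, hKq0, hKq⟩ := aux_bound q (N - n) (by omega)
  obtain ⟨Kr, hKr0, hKr⟩ := aux_bound r (N - 1) (by omega)
  refine ⟨2 * (Kp + Kq), max 1 (2 * Kr), by positivity, le_max_left _ _, fun v hvi hv => ?_⟩
  have h1 : 1 ≤ ‖v‖ := (le_max_left _ _).trans hv
  have h2 : 2 * Kr ≤ ‖v‖ := (le_max_right _ _).trans hv
  have hp' := hKp v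
  have hq' := hKq v
  have hr' := hKr v
  rw [max_eq_right h1] at hp' hq' hr'
  have hf : ‖eval v f‖ ≤ ‖auxG f g v‖ := norm_le_pi_norm (auxG f g v) 0
  have hg : ‖eval v g‖ ≤ ‖auxG f g v‖ := norm_le_pi_norm (auxG f g v) 1
  set t := ‖v‖ with ht
  set γ := ‖auxG f g v‖ with hγ
  have hev : ‖v i‖ ^ N ≤ ‖eval v p‖ * ‖eval v f‖ + ‖eval v q‖ * ‖eval v g‖ + ‖eval v r‖ := by
    have := congrArg (eval v) he
    simp only [map_pow, eval_X, map_add, map_mul] at this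
    rw [← norm_pow, this]
    refine (norm_add_le _ _).trans ?_
    gcongr
    refine (norm_add_le _ _).trans ?_
    rw [norm_mul, norm_mul]
  rw [hvi] at hev
  have hev2 : t ^ N ≤ Kp * t ^ (N - n) * γ + Kq * t ^ (N - n) * γ + Kr * t ^ (N - 1) := by
    refine hev.trans ?_
    gcongr
  have hN : t ^ N = t ^ (N - 1) * t := by rw [← pow_succ]; congr 1; omega
  have hN2 : t ^ N = t ^ (N - n) * t ^ n := by rw [← pow_add]; congr 1; omega
  have ht1 : 0 < t ^ (N - 1) := by positivity
  have ht2 : 0 < t ^ (N - n) := by positivity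
  have h3 : 2 * (Kr * t ^ (N - 1)) ≤ t ^ N := by
    rw [hN]; nlinarith
  have h4 : t ^ (N - n) * t ^ n ≤ t ^ (N - n) * (2 * (Kp + Kq) * γ) := by
    rw [← hN2]; nlinarith
  exact le_of_mul_le_mul_left h4 ht2

lemma aux_proper (n N : ℕ) (f g : MvPolynomial (Fin 2) ℂ)
    (h : ∀ i, AuxPow n N f g i) : ∃ K R : ℝ, 0 ≤ K ∧ 1 ≤ R ∧ ∀ v : Fin 2 → ℂ,
      R ≤ ‖v‖ → ‖v‖ ^ n ≤ K * ‖auxG f g v‖ := by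
  obtain ⟨K0, R0, hK0, hR0, h0⟩ := aux_proper1 n N f g 0 (h 0)
  obtain ⟨K1, R1, hK1, hR1, h1⟩ := aux_proper1 n N f g 1 (h 1)
  refine ⟨K0 + K1, max R0 R1, by positivity, hR0.trans (le_max_left _ _), fun v hv => ?_⟩
  have hv0 := (le_max_left _ _).trans hv
  have hv1 := (le_max_right _ _).trans hv
  have hG := norm_nonneg (auxG f g v)
  have : ‖v 0‖ = ‖v‖ ∨ ‖v 1‖ = ‖v‖ := by
    have hle0 := norm_le_pi_norm v 0
    have hle1 := norm_le_pi_norm v 1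
    by_contra hcon
    push Not at hcon
    have : ‖v‖ < ‖v‖ := by
      rw [pi_norm_lt_iff (by linarith)]
      intro i
      fin_cases i
      · exact lt_of_le_of_ne hle0 hcon.1
      · exact lt_of_le_of_ne hle1 hcon.2
    exact lt_irrefl _ this
  rcases this with hh | hh
  · have := h0 v hh hv0; nlinarith
  · have := h1 v hh hv1; nlinarith

lemma aux_continuous_G (f g : MvPolynomial (Fin 2) ℂ) : Continuous (auxG f g) := by
  unfold auxG
  refine continuous_pi fun i => ?_
  fin_cases i
  · exact f.continuous_eval
  · exact g.continuous_eval

lemma aux_near_zero (n : ℕ) (f g : MvPolynomial (Fin 2) ℂ) (K R : ℝ) (hR : 1 ≤ R) (hK : 0 ≤ K)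
    (h : ∀ v : Fin 2 → ℂ, R ≤ ‖v‖ → ‖v‖ ^ n ≤ K * ‖auxG f g v‖)
    (hz : ∀ v, auxG f g v = 0 → v = 0) (ρ : ℝ) (hρ : 0 < ρ) :
    ∃ η > 0, ∀ v, ‖auxG f g v‖ < η → ‖v‖ < ρ := by
  have hc : IsCompact (Metric.closedBall (0 : Fin 2 → ℂ) R ∩ {v | ρ ≤ ‖v‖}) :=
    (isCompact_closedBall _ _).inter_right (isClosed_le continuous_const continuous_norm)
  have : ∃ η1 > 0, ∀ v ∈ Metric.closedBall (0 : Fin 2 → ℂ) R ∩ {v | ρ ≤ ‖v‖}, η1 ≤ ‖auxG f g v‖ := by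
    rcases Set.eq_empty_or_nonempty (Metric.closedBall (0 : Fin 2 → ℂ) R ∩ {v | ρ ≤ ‖v‖}) with he | hne
    · exact ⟨1, one_pos, by simp [he]⟩
    · obtain ⟨v0, hv0, hmin⟩ := hc.exists_isMinOn hne (aux_continuous_G f g).norm.continuousOn
      refine ⟨‖auxG f g v0‖, ?_, fun v hv => hmin hv⟩
      rw [gt_iff_lt, norm_pos_iff]
      intro h0
      have := hz v0 h0
      have h2 : ρ ≤ ‖v0‖ := hv0.2
      rw [this, norm_zero] at h2
      linarith
  obtain ⟨η1, hη1, hη⟩ := this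
  refine ⟨min η1 (1 / (K + 1)), by positivity, fun v hv => ?_⟩
  by_contra hcon
  push Not at hcon
  by_cases hvR : ‖v‖ ≤ R
  · have := hη v ⟨by simpa using hvR, hcon⟩
    exact absurd hv (not_lt.2 ((min_le_left _ _).trans this))
  · push Not at hvR
    have h1 := h v hvR.le
    have h2 : 1 ≤ ‖v‖ ^ n := one_le_pow₀ (hR.trans hvR.le)
    have h3 : ‖auxG f g v‖ < 1 / (K + 1) := hv.trans_le (min_le_right _ _)
    rw [lt_div_iff₀ (by positivity)] at h3
    nlinarith [norm_nonneg (auxG f g v)]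

/-- The differential of a polynomial. -/
noncomputable def auxD (p : MvPolynomial (Fin 2) ℂ) (v : Fin 2 → ℂ) : (Fin 2 → ℂ) →L[ℂ] ℂ :=
  eval v (pderiv 0 p) • ContinuousLinearMap.proj (R := ℂ) (φ := fun _ : Fin 2 => ℂ) 0
    + eval v (pderiv 1 p) • ContinuousLinearMap.proj (R := ℂ) (φ := fun _ : Fin 2 => ℂ) 1

lemma auxD_apply (p : MvPolynomial (Fin 2) ℂ) (v u : Fin 2 → ℂ) :
    auxD p v u = eval v (pderiv 0 p) * u 0 + eval v (pderiv 1 p) * u 1 := by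
  simp [auxD]

lemma aux_hasDeriv (p : MvPolynomial (Fin 2) ℂ) (v : Fin 2 → ℂ) :
    HasStrictFDerivAt (𝕜 := ℂ) (fun v : Fin 2 → ℂ => eval v p) (auxD p v) v := by
  induction p using MvPolynomial.induction_on with
  | C c =>
    have h := hasStrictFDerivAt_const (𝕜 := ℂ) c v
    simp only [eval_C]
    refine h.congr_fderiv ?_
    ext u; simp [auxD]
  | add p q hp hq =>
    simp only [map_add]
    refine (hp.fun_add hq).congr_fderiv ?_
    ext u; simp [auxD]; ring
  | mul_X p i hp =>
    have hX : HasStrictFDerivAt (𝕜 := ℂ) (fun v : Fin 2 → ℂ => v i)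
      (ContinuousLinearMap.proj (R := ℂ) (φ := fun _ : Fin 2 => ℂ) i) v :=
      (ContinuousLinearMap.proj (R := ℂ) (φ := fun _ : Fin 2 => ℂ) i).hasStrictFDerivAt
    simp only [map_mul, eval_X]
    refine (hp.fun_mul hX).congr_fderiv ?_
    ext u
    fin_cases i <;> simp [auxD, pderiv_mul, pderiv_X] <;> ring

lemma aux_poly (P : Polynomial ℂ) (d : ℕ) (K : ℝ)
    (hinf : ∀ s : ℝ, 1 ≤ s → ‖P.eval (s : ℂ)‖ ≤ K * s ^ d)
    (h0 : ∀ ε > 0, ∃ δ > 0, ∀ s : ℝ, 0 < s → s < δ → ‖P.eval (s : ℂ)‖ ≤ ε * s ^ d) : P = 0 := by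
  have hdvd : ∀ j ≤ d + 1, Polynomial.X ^ j ∣ P := by
    intro j
    induction j with
    | zero => intro _; simp
    | succ j ih =>
      intro hj
      obtain ⟨Q, hQ⟩ := ih (by omega)
      have hQ0 : Q.eval 0 = 0 := by
        rw [← norm_le_zero_iff]
        refine le_of_forall_pos_le_add fun ε hε => ?_
        obtain ⟨δ, hδ, hs⟩ := h0 ε hε
        have ht : Filter.Tendsto (fun s : ℝ => ‖Q.eval (s : ℂ)‖) (nhdsWithin 0 (Set.Ioi 0))
            (nhds ‖Q.eval ((0 : ℝ) : ℂ)‖) := by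
          apply Filter.Tendsto.mono_left _ nhdsWithin_le_nhds
          exact (Q.continuous.comp Complex.continuous_ofReal).norm.tendsto 0
        rw [Complex.ofReal_zero] at ht
        rw [zero_add]
        refine le_of_tendsto ht ?_
        have : Set.Ioo (0 : ℝ) (min δ 1) ∈ nhdsWithin (0 : ℝ) (Set.Ioi 0) :=
          Ioo_mem_nhdsGT (by positivity)
        filter_upwards [this] with s hsm
        have hs1 := hs s hsm.1 (hsm.2.trans_le (min_le_left _ _))
        have hs2 : s ≤ 1 := (hsm.2.trans_le (min_le_right _ _)).le
        have hs0 := hsm.1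
        rw [hQ] at hs1
        simp only [Polynomial.eval_mul, Polynomial.eval_pow, Polynomial.eval_X, norm_mul, norm_pow,
          Complex.norm_real, Real.norm_eq_abs, abs_of_pos hs0] at hs1
        have hle : s ^ d ≤ s ^ j := pow_le_pow_of_le_one hs0.le hs2 (by omega)
        have hsj : 0 < s ^ j := by positivity
        have : s ^ j * ‖Q.eval (s : ℂ)‖ ≤ s ^ j * ε := by nlinarith
        exact le_of_mul_le_mul_left this hsj
      obtain ⟨Q', hQ'⟩ := (Polynomial.X_dvd_iff (f := Q)).2 (by rwa [Polynomial.coeff_zero_eq_eval_zero])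
      exact ⟨Q', by rw [hQ, hQ', pow_succ]; ring⟩
  obtain ⟨Q, hQ⟩ := hdvd (d + 1) le_rfl
  have hb : ∀ s : ℝ, 1 ≤ s → s * ‖Q.eval (s : ℂ)‖ ≤ K := by
    intro s hs
    have hs0 : 0 < s := by linarith
    have := hinf s hs
    rw [hQ] at this
    simp only [Polynomial.eval_mul, Polynomial.eval_pow, Polynomial.eval_X, norm_mul, norm_pow,
          Complex.norm_real, Real.norm_eq_abs, abs_of_pos hs0] at this
    have hsd : 0 < s ^ d := by positivity
    refine le_of_mul_le_mul_left ?_ hsd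
    calc s ^ d * (s * ‖Q.eval (s : ℂ)‖) = s ^ (d + 1) * ‖Q.eval (s : ℂ)‖ := by ring
      _ ≤ _ := by linarith
  have hQ0 : Q = 0 := by
    by_cases hdeg : 0 < Q.degree
    · exfalso
      have ht := Polynomial.tendsto_norm_atTop Q hdeg (l := Filter.atTop) (z := fun s : ℝ => (s : ℂ))
        (by simpa using Filter.tendsto_abs_atTop_atTop)
      obtain ⟨s, hs1, hs2⟩ := ((ht.eventually_gt_atTop K).and (Filter.eventually_ge_atTop 1)).exists
      have := hb s hs2
      nlinarith [norm_nonneg (Q.eval (s : ℂ))]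
    · rw [not_lt] at hdeg
      obtain ⟨c, hc⟩ : ∃ c, Q = Polynomial.C c := ⟨_, Polynomial.eq_C_of_degree_le_zero hdeg⟩
      rw [hc] at hb ⊢
      simp only [Polynomial.eval_C] at hb
      by_contra hne
      have hc0 : 0 < ‖c‖ := by
        rw [norm_pos_iff]; rintro rfl; simp at hne
      have := hb (max 1 ((K + 1) / ‖c‖)) (le_max_left _ _)
      have h2 : (K + 1) / ‖c‖ * ‖c‖ ≤ max 1 ((K + 1) / ‖c‖) * ‖c‖ := by gcongr; exact le_max_right _ _
      rw [div_mul_cancel₀ _ hc0.ne'] at h2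
      linarith
  rw [hQ, hQ0, mul_zero]


/-- Legendre transform. -/
noncomputable def auxL (H : MvPolynomial (Fin 2) ℂ) : MvPolynomial (Fin 2) ℂ :=
  X 0 * pderiv 0 H + X 1 * pderiv 1 H - H

lemma aux_push (H : MvPolynomial (Fin 2) ℂ) (w q : Fin 2 → ℂ) (T Λ : ℝ) (hT : 0 < T)
    (hG : auxG (pderiv 0 H) (pderiv 1 H) q = (T : ℂ) • w)
    (hdet : eval q (pderiv 0 (pderiv 0 H) * pderiv 1 (pderiv 1 H)
      - pderiv 1 (pderiv 0 H) * pderiv 0 (pderiv 1 H)) ≠ 0)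
    (hsmall : ‖q 0 * w 0 + q 1 * w 1‖ < Λ) :
    ∃ s : ℝ, 0 < s ∧ s < T ∧ ∃ v, auxG (pderiv 0 H) (pderiv 1 H) v = (s : ℂ) • w ∧
      ‖eval v (auxL H) - eval q (auxL H)‖ ≤ Λ * (T - s) := by
  set f := pderiv 0 H with hf
  set g := pderiv 1 H with hg
  let G' : (Fin 2 → ℂ) →L[ℂ] (Fin 2 → ℂ) := ContinuousLinearMap.pi ![auxD f q, auxD g q]
  have hG'0 : ∀ u, G' u 0 = auxD f q u := fun u => rfl
  have hG'1 : ∀ u, G' u 1 = auxD g q u := fun u => rfl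
  have hder : HasStrictFDerivAt (auxG f g) G' q := by
    rw [hasStrictFDerivAt_pi']
    intro i
    fin_cases i
    · exact aux_hasDeriv f q
    · exact aux_hasDeriv g q
  have hinj : Function.Injective (G' : (Fin 2 → ℂ) →ₗ[ℂ] (Fin 2 → ℂ)) := by
    rw [← LinearMap.ker_eq_bot, LinearMap.ker_eq_bot']
    intro u hu
    have e0 : G' u 0 = 0 := congrFun hu 0
    have e1 : G' u 1 = 0 := congrFun hu 1
    rw [hG'0, auxD_apply] at e0
    rw [hG'1, auxD_apply] at e1
    simp only [map_sub, map_mul] at hdet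
    funext i
    fin_cases i
    · refine (mul_eq_zero.1 (?_ : _ * u 0 = 0)).resolve_left hdet
      linear_combination eval q (pderiv 1 g) * e0 - eval q (pderiv 1 f) * e1
    · refine (mul_eq_zero.1 (?_ : _ * u 1 = 0)).resolve_left hdet
      linear_combination eval q (pderiv 0 f) * e1 - eval q (pderiv 0 g) * e0
  let e : (Fin 2 → ℂ) ≃L[ℂ] (Fin 2 → ℂ) :=
    (LinearEquiv.ofInjectiveEndo (G' : (Fin 2 → ℂ) →ₗ[ℂ] (Fin 2 → ℂ)) hinj).toContinuousLinearEquiv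
  have he : ∀ u, e u = G' u := fun u => rfl
  have hder' : HasStrictFDerivAt (auxG f g) (e : (Fin 2 → ℂ) →L[ℂ] (Fin 2 → ℂ)) q := hder
  let loc := hder'.localInverse (auxG f g) e q
  have hloc : HasStrictFDerivAt loc (e.symm : (Fin 2 → ℂ) →L[ℂ] (Fin 2 → ℂ)) (auxG f g q) :=
    hder'.to_localInverse
  have hlocq : loc (auxG f g q) = q := hder'.localInverse_apply_image
  have hright : ∀ᶠ y in nhds (auxG f g q), auxG f g (loc y) = y := hder'.eventually_right_inverse
  have hline : HasDerivAt (fun c : ℂ => c • w) w (T : ℂ) := by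
    simpa using (hasDerivAt_id (T : ℂ)).smul_const w
  rw [hG] at hloc hlocq hright
  have hcurve : HasDerivAt (fun c : ℂ => loc (c • w)) (e.symm w) (T : ℂ) :=
    HasFDerivAt.comp_hasDerivAt (l := loc) (f := fun c : ℂ => c • w) (T : ℂ) hloc.hasFDerivAt hline
  have hLc : HasDerivAt (fun c : ℂ => eval (loc (c • w)) (auxL H)) (auxD (auxL H) q (e.symm w)) (T : ℂ) := by
    have h1 := (aux_hasDeriv (auxL H) q).hasFDerivAt
    rw [← hlocq] at h1
    have := h1.comp_hasDerivAt (T : ℂ) hcurve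
    rw [hlocq] at this
    exact this
  have hval : auxD (auxL H) q (e.symm w) = q 0 * w 0 + q 1 * w 1 := by
    set u := e.symm w with hu
    have hw : G' u = w := by rw [← he, hu]; simp
    rw [← hw, hG'0, hG'1, auxD_apply, auxD_apply, auxD_apply]
    have hc : pderiv 1 f = pderiv 1 f := rfl
    simp only [auxL, ← hf, ← hg, map_sub, map_add, pderiv_mul, pderiv_X, map_mul, eval_X]
    simp
    ring
  rw [hval] at hLc
  have hev : ∀ᶠ c : ℂ in nhds (T : ℂ), ‖eval (loc (c • w)) (auxL H) - eval q (auxL H)‖ ≤ Λ * ‖c - T‖ := by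
    have ho := (hasDerivAt_iff_isLittleO.1 hLc).def (sub_pos.2 hsmall)
    filter_upwards [ho] with c hc
    rw [hlocq] at hc
    set a := eval (loc (c • w)) (auxL H) - eval q (auxL H) with ha
    have h1 : a = (a - (c - T) • (q 0 * w 0 + q 1 * w 1)) + (c - T) • (q 0 * w 0 + q 1 * w 1) := by ring
    rw [h1]
    refine (norm_add_le _ _).trans ?_
    rw [norm_smul (c - (T : ℂ))]
    nlinarith
  have hright' : ∀ᶠ c : ℂ in nhds (T : ℂ), auxG f g (loc (c • w)) = c • w :=
    hline.continuousAt.eventually hright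
  have hall : ∀ᶠ s : ℝ in nhds T,
      (‖eval (loc ((s : ℂ) • w)) (auxL H) - eval q (auxL H)‖ ≤ Λ * ‖(s : ℂ) - T‖ ∧
        auxG f g (loc ((s : ℂ) • w)) = (s : ℂ) • w) :=
    (Complex.continuous_ofReal.tendsto T).eventually (hev.and hright')
  have hall2 : ∀ᶠ s : ℝ in nhdsWithin T (Set.Iio T), 
      (‖eval (loc ((s : ℂ) • w)) (auxL H) - eval q (auxL H)‖ ≤ Λ * ‖(s : ℂ) - T‖ ∧
        auxG f g (loc ((s : ℂ) • w)) = (s : ℂ) • w) := hall.filter_mono nhdsWithin_le_nhds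
  have hIoo : Set.Ioo 0 T ∈ nhdsWithin T (Set.Iio T) := Ioo_mem_nhdsLT hT
  obtain ⟨s, ⟨h1, h2⟩, h3⟩ := (hall2.and hIoo).exists
  refine ⟨s, h3.1, h3.2, _, h2, h1.trans_eq ?_⟩
  rw [← Complex.ofReal_sub, Complex.norm_real, Real.norm_eq_abs, abs_of_neg (by linarith [h3.2])]
  ring

lemma aux_ray (H : MvPolynomial (Fin 2) ℂ) (w : Fin 2 → ℂ) (τ Λ R : ℝ) (hτ : 0 < τ)
    (hbd : ∀ (s : ℝ) v, 0 ≤ s → s ≤ τ → auxG (pderiv 0 H) (pderiv 1 H) v = (s : ℂ) • w → ‖v‖ ≤ R)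
    (hz : ∀ v, auxG (pderiv 0 H) (pderiv 1 H) v = 0 → v = 0)
    (hL0 : eval 0 (auxL H) = 0)
    (hdet : ∀ (s : ℝ) v, 0 < s → s ≤ τ → auxG (pderiv 0 H) (pderiv 1 H) v = (s : ℂ) • w → 
      eval v (pderiv 0 (pderiv 0 H) * pderiv 1 (pderiv 1 H)
      - pderiv 1 (pderiv 0 H) * pderiv 0 (pderiv 1 H)) ≠ 0)
    (hsmall : ∀ (s : ℝ) v, 0 ≤ s → s ≤ τ → auxG (pderiv 0 H) (pderiv 1 H) v = (s : ℂ) • w → 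
      ‖v 0 * w 0 + v 1 * w 1‖ < Λ) (q : Fin 2 → ℂ) 
      (hq : auxG (pderiv 0 H) (pderiv 1 H) q = (τ : ℂ) • w) : ‖eval q (auxL H)‖ ≤ Λ * τ := by
  let Z : Set (ℝ × (Fin 2 → ℂ)) := {x | x ∈ Set.Icc 0 τ ×ˢ Metric.closedBall 0 R ∧
    auxG (pderiv 0 H) (pderiv 1 H) x.2 = (x.1 : ℂ) • w ∧
    ‖eval q (auxL H)‖ - Λ * τ ≤ ‖eval x.2 (auxL H)‖ - Λ * x.1}
  have hc1 : IsCompact (Set.Icc 0 τ ×ˢ Metric.closedBall (0 : Fin 2 → ℂ) R) :=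
    isCompact_Icc.prod (isCompact_closedBall _ _)
  have hcl : IsClosed {x : ℝ × (Fin 2 → ℂ) | auxG (pderiv 0 H) (pderiv 1 H) x.2 = (x.1 : ℂ) • w ∧
    ‖eval q (auxL H)‖ - Λ * τ ≤ ‖eval x.2 (auxL H)‖ - Λ * x.1} := by
    refine IsClosed.and ?_ ?_
    · refine isClosed_eq ((aux_continuous_G _ _).comp continuous_snd) ?_
      exact (Complex.continuous_ofReal.comp continuous_fst).smul continuous_const
    · refine isClosed_le continuous_const ?_
      refine Continuous.sub ?_ (continuous_const.mul continuous_fst)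
      exact ((auxL H).continuous_eval.comp continuous_snd).norm
  have hZ : IsCompact Z := hc1.inter_right hcl
  have hne : Z.Nonempty := ⟨(τ, q), ⟨⟨⟨hτ.le, le_rfl⟩, by simpa using hbd τ q hτ.le le_rfl hq⟩, hq, le_rfl⟩⟩
  obtain ⟨⟨T, v⟩, ⟨⟨⟨hT0, hTτ⟩, hvR⟩, hGv, hLv⟩, hmin⟩ := hZ.exists_isMinOn hne continuous_fst.continuousOn
  simp only at hT0 hTτ hGv hLv
  rcases hT0.eq_or_lt with h0 | hpos
  · rw [← h0] at hGv hLv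
    have : v = 0 := hz v (by simpa using hGv)
    rw [this, hL0] at hLv
    simp at hLv
    linarith
  · exfalso
    obtain ⟨s, hs0, hsT, v', hv', hle⟩ := aux_push H w v T Λ hpos hGv (hdet T v hpos hTτ hGv)
      (hsmall T v hT0 hTτ hGv)
    have hmem : (s, v') ∈ Z := by
      refine ⟨⟨⟨hs0.le, (hsT.le.trans hTτ)⟩, by simpa using hbd s v' hs0.le (hsT.le.trans hTτ) hv'⟩, hv', ?_⟩
      have := norm_sub_norm_le (eval v (auxL H)) (eval v' (auxL H))
      rw [norm_sub_rev] at this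
      show _ ≤ ‖eval v' (auxL H)‖ - Λ * s
      linarith
    have h2 : T ≤ s := hmin hmem
    linarith


lemma aux_root (f g E : MvPolynomial (Fin 2) ℂ)
    (hinj : Function.Injective
      (aeval ![f, g] : MvPolynomial (Fin 2) ℂ →ₐ[ℂ] MvPolynomial (Fin 2) ℂ))
    (hint : (aeval ![f, g] :
      MvPolynomial (Fin 2) ℂ →ₐ[ℂ] MvPolynomial (Fin 2) ℂ).toRingHom.IsIntegral)
    (hE : E ≠ 0) :
    ∃ M : Polynomial (MvPolynomial (Fin 2) ℂ), M.Monic ∧ M.coeff 0 ≠ 0 ∧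
      (∀ v, (M.map (eval (auxG f g v))).eval (eval v E) = 0) ∧
      ∀ (y : Fin 2 → ℂ) (r : ℂ), (M.map (eval y)).IsRoot r →
        ∃ v, auxG f g v = y ∧ eval v E = r := by
  obtain ⟨M, hM, hc, h0, hr⟩ := aux_minpoly _ hinj hint E hE
  have hcomp : ∀ v p, eval v (aeval ![f, g] p) = eval (auxG f g v) p := by
    intro v p
    induction p using MvPolynomial.induction_on with
    | C c => simp
    | add p q hp hq => simp only [map_add, hp, hq]
    | mul_X p i hp =>
      simp only [map_mul, hp, aeval_X, eval_X]
      congr 1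
      fin_cases i <;> rfl
  refine ⟨M, hM, hc, fun v => ?_, fun y r hroot => ?_⟩
  · have h1 := congrArg (eval v) h0
    rw [Polynomial.hom_eval₂, map_zero] at h1
    rw [Polynomial.eval_map, ← h1]
    congr 1
    ext p
    · exact (hcomp v _).symm
    · exact (hcomp v _).symm
  · obtain ⟨Q, hQ, h1, h2⟩ := hr (eval y) (fun c => ⟨C c, eval_C c⟩) r hroot
    obtain ⟨v, hv⟩ := (isMaximal_iff_eq_vanishingIdeal_singleton (σ := Fin 2) (K := ℂ)).1 hQ
    have hmem : ∀ p, p ∈ Q → eval v p = 0 := by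
      intro p hp
      rw [hv, mem_vanishingIdeal_iff] at hp
      simpa using hp v rfl
    refine ⟨v, ?_, ?_⟩
    · funext i
      have h3 := hmem _ (h1 (X i - C (y i)) (by simp))
      have h4 := (hcomp v (X i - C (y i))).symm.trans h3
      simpa [sub_eq_zero] using h4
    · have h3 := hmem _ (h2 (C r) (by simp))
      rw [map_sub, sub_eq_zero] at h3
      rw [h3]
      exact (hcomp v _).trans (by simp)

lemma aux_coeff_bound (M : Polynomial (MvPolynomial (Fin 2) ℂ)) (hM : M.Monic) (y : Fin 2 → ℂ)
    (β : ℝ) (h : ∀ r, (M.map (eval y)).IsRoot r → ‖r‖ ≤ β) :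
    ‖eval y (M.coeff 0)‖ ≤ β ^ M.natDegree := by
  have hm : (M.map (eval y)).Monic := hM.map _
  have hs : (M.map (eval y)).Splits := IsAlgClosed.splits _
  have h1 := hs.coeff_zero_eq_prod_roots_of_monic hm
  rw [Polynomial.coeff_map] at h1
  have hcard : (M.map (eval y)).roots.card = M.natDegree := by
    rw [← hs.natDegree_eq_card_roots, hM.natDegree_map]
  rw [h1, norm_mul, norm_pow, norm_neg, norm_one, one_pow, one_mul, ← hcard]
  have : ∀ s : Multiset ℂ, (∀ r ∈ s, ‖r‖ ≤ β) → ‖s.prod‖ ≤ β ^ s.card := by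
    intro s
    induction s using Multiset.induction_on with
    | empty => simp
    | cons a s ih =>
      intro hs
      rw [Multiset.prod_cons, Multiset.card_cons, norm_mul, pow_succ']
      have ha := hs a (Multiset.mem_cons_self _ _)
      exact mul_le_mul ha (ih fun r hr => hs r (Multiset.mem_cons_of_mem hr)) (norm_nonneg _)
        ((norm_nonneg _).trans ha)
  exact this _ fun r hr => h r (Polynomial.isRoot_of_mem_roots hr)

/-- Restriction of a polynomial to the line spanned by `w`. -/
noncomputable def auxLine (w : Fin 2 → ℂ) (p : MvPolynomial (Fin 2) ℂ) : Polynomial ℂ :=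
  aeval (fun i => Polynomial.C (w i) * Polynomial.X) p

lemma auxLine_eval (w : Fin 2 → ℂ) (p : MvPolynomial (Fin 2) ℂ) (s : ℂ) :
    (auxLine w p).eval s = eval (s • w) p := by
  unfold auxLine
  induction p using MvPolynomial.induction_on with
  | C c => simp
  | add p q hp hq => simp only [map_add, Polynomial.eval_add, hp, hq]
  | mul_X p i hp =>
    simp only [map_mul, Polynomial.eval_mul, hp, aeval_X, eval_X, Polynomial.eval_C,
      Polynomial.eval_X, Pi.smul_apply, smul_eq_mul]
    ring

lemma aux_nonzero_near (P : Polynomial ℂ) (hP : P ≠ 0) :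
    ∃ δ > 0, ∀ s : ℝ, 0 < s → s < δ → P.eval (s : ℂ) ≠ 0 := by
  have hfin : {s : ℝ | P.eval (s : ℂ) = 0}.Finite := by
    have h1 : {z : ℂ | P.IsRoot z}.Finite := Polynomial.finite_setOfPred_isRoot hP
    exact h1.preimage (f := fun s : ℝ => (s : ℂ)) Complex.ofReal_injective.injOn
  have hcl : IsClosed ({s : ℝ | P.eval (s : ℂ) = 0} \ {0}) := (hfin.subset Set.sdiff_subset).isClosed
  have hmem : ({s : ℝ | P.eval (s : ℂ) = 0} \ {0})ᶜ ∈ nhds (0 : ℝ) :=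
    hcl.isOpen_compl.mem_nhds (by simp)
  obtain ⟨δ, hδ, hsub⟩ := Metric.mem_nhds_iff.1 hmem
  refine ⟨δ, hδ, fun s hs0 hs h => ?_⟩
  exact hsub (show s ∈ Metric.ball 0 δ by simpa [abs_of_pos hs0] using hs) ⟨h, hs0.ne'⟩

lemma aux_main (n : ℕ) (hn : 1 ≤ n) (H : MvPolynomial (Fin 2) ℂ) (hdeg : H.totalDegree ≤ n + 1)
    (N : ℕ) (hpow : ∀ i, AuxPow n N (pderiv 0 H) (pderiv 1 H) i)
    (hz : ∀ v, auxG (pderiv 0 H) (pderiv 1 H) v = 0 → v = 0)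
    (hL0 : eval 0 (auxL H) = 0) : auxE n H = 0 := by
  by_contra hE
  have hI := aux_integral n N hn _ _ hpow
  have hinj := aux_inj _ _ hI
  have hint := aux_isIntegral _ _ hI
  have hhess := aux_hess _ _ hint
  obtain ⟨M, hM, hc, hMr, hroot⟩ := aux_root _ _ _ hinj hint hE
  obtain ⟨M', -, hc', hMr', -⟩ := aux_root _ _ _ hinj hint hhess
  obtain ⟨K, R, hK, hR, hprop⟩ := aux_proper n N _ _ hpow
  set f := pderiv 0 H with hf
  set g := pderiv 1 H with hg
  set c := M.coeff 0 with hcdef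
  set Δ := M'.coeff 0 with hΔdef
  have hw : ∃ w : Fin 2 → ℂ, eval w (c * Δ) ≠ 0 := by
    by_contra hcon
    push Not at hcon
    exact mul_ne_zero hc hc' (MvPolynomial.funext fun x => by rw [hcon x, map_zero])
  obtain ⟨w, hw⟩ := hw
  rw [map_mul] at hw
  have hwc := left_ne_zero_of_mul hw
  have hwΔ := right_ne_zero_of_mul hw
  have hPne : ∀ p, eval w p ≠ 0 → auxLine w p ≠ 0 := by
    intro p hp h
    apply hp
    have := auxLine_eval w p 1
    rw [h, one_smul] at this
    simpa using this.symm
  have hdetne : ∀ v, eval (auxG f g v) Δ ≠ 0 →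
      eval v (pderiv 0 f * pderiv 1 g - pderiv 1 f * pderiv 0 g) ≠ 0 := by
    intro v hv h
    have h1 := hMr' v
    rw [h, ← Polynomial.coeff_zero_eq_eval_zero, Polynomial.coeff_map] at h1
    exact hv h1
  have hd1 : 1 ≤ M.natDegree := by
    by_contra hcon
    have h1 : M = 1 := hM.natDegree_eq_zero.1 (by omega)
    have := hMr 0
    simp [h1] at this
  refine hPne c hwc ?_
  -- bound at infinity
  obtain ⟨KE, hKE0, hKE⟩ := aux_bound _ n (aux_E_deg n H hdeg)
  have hG : ∀ (s : ℝ) v, 0 ≤ s → auxG f g v = (s : ℂ) • w → ‖auxG f g v‖ = s * ‖w‖ := by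
    intro s v hs h
    rw [h, norm_smul, Complex.norm_real, Real.norm_eq_abs, abs_of_nonneg hs]
  refine aux_poly _ M.natDegree ((KE * (R ^ n + K * ‖w‖)) ^ M.natDegree) ?_ ?_
  · intro s hs
    rw [auxLine_eval, ← mul_pow]
    refine aux_coeff_bound M hM _ _ fun r hr => ?_
    obtain ⟨v, hv, rfl⟩ := hroot _ r hr
    refine (hKE v).trans ?_
    rw [mul_assoc]
    refine mul_le_mul_of_nonneg_left ?_ hKE0
    have hRn : 0 ≤ R ^ n := by positivity
    have hKw : 0 ≤ K * ‖w‖ := by positivity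
    by_cases hvR : R ≤ ‖v‖
    · rw [max_eq_right (hR.trans hvR)]
      have := hprop v hvR
      rw [hG s v (by linarith) hv] at this
      nlinarith
    · push Not at hvR
      have : (max 1 ‖v‖) ^ n ≤ R ^ n := by
        gcongr
        exact max_le hR hvR.le
      nlinarith
  · intro ε hε
    set Λ : ℝ := min ε 1 / (2 * n + 1) with hΛ
    have hΛ0 : 0 < Λ := by positivity
    have hρ : 0 < min 1 (Λ / (2 * ‖w‖ + 1)) := by positivity
    obtain ⟨η, hη, hnear⟩ := aux_near_zero n f g K R hR hK hprop hz _ hρ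
    obtain ⟨δ, hδ, hΔne⟩ := aux_nonzero_near _ (hPne Δ hwΔ)
    refine ⟨min δ (η / (‖w‖ + 1)), by positivity, fun s hs0 hs => ?_⟩
    have hsδ : s < δ := hs.trans_le (min_le_left _ _)
    have hsη : s < η / (‖w‖ + 1) := hs.trans_le (min_le_right _ _)
    rw [lt_div_iff₀ (by positivity)] at hsη
    have hnv : ∀ (t : ℝ) v, 0 ≤ t → t ≤ s → auxG f g v = (t : ℂ) • w →
        ‖v‖ < min 1 (Λ / (2 * ‖w‖ + 1)) := by
      intro t v ht hts h
      apply hnear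
      rw [hG t v ht h]
      nlinarith [norm_nonneg w]
    have hsm : ∀ (t : ℝ) v, 0 ≤ t → t ≤ s → auxG f g v = (t : ℂ) • w →
        ‖v 0 * w 0 + v 1 * w 1‖ < Λ := by
      intro t v ht hts h
      have h1 := (hnv t v ht hts h).trans_le (min_le_right _ _)
      rw [lt_div_iff₀ (by positivity)] at h1
      refine (norm_add_le _ _).trans_lt ?_
      rw [norm_mul, norm_mul]
      have a0 := mul_le_mul (norm_le_pi_norm v 0) (norm_le_pi_norm w 0) (norm_nonneg _) (norm_nonneg _)
      have a1 := mul_le_mul (norm_le_pi_norm v 1) (norm_le_pi_norm w 1) (norm_nonneg _) (norm_nonneg _)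
      rcases (norm_nonneg v).eq_or_lt with hv0 | hv0
      · rw [← hv0] at a0 a1
        linarith
      · linarith
    have hbeta : ∀ r, (M.map (eval ((s : ℂ) • w))).IsRoot r → ‖r‖ ≤ min ε 1 * s := by
      intro r hr
      obtain ⟨v, hv, rfl⟩ := hroot _ r hr
      have hray := aux_ray H w s Λ 1 hs0
        (fun t u ht hts h => ((hnv t u ht hts h).trans_le (min_le_left _ _)).le) hz hL0
        (fun t u ht hts h => hdetne u (by
          rw [show auxG f g u = (t : ℂ) • w from h, ← auxLine_eval]
          exact hΔne t ht (by linarith))) hsm v hv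
      have hℓ := hsm s v hs0.le le_rfl hv
      have e0 : eval v f = s * w 0 := congrFun hv 0
      have e1 : eval v g = s * w 1 := congrFun hv 1
      have hEL : eval v (auxE n H) = (n * s : ℂ) * (v 0 * w 0 + v 1 * w 1)
          - (n + 1 : ℂ) * eval v (auxL H) := by
        simp only [auxE, auxL, ← hf, ← hg, map_sub, map_add, map_mul, eval_X, eval_C, e0, e1, map_natCast, map_one]
        ring
      rw [hEL]
      refine (norm_sub_le _ _).trans ?_
      have hn1 : ‖(n + 1 : ℂ)‖ = n + 1 := by
        rw [← Nat.cast_succ, Complex.norm_natCast]; push_cast; rfl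
      rw [norm_mul, norm_mul, norm_mul, hn1, Complex.norm_natCast, Complex.norm_real,
        Real.norm_eq_abs, abs_of_pos hs0]
      have hΛ2 : min ε 1 = Λ * (2 * n + 1) := by
        rw [hΛ, div_mul_cancel₀]; positivity
      rw [hΛ2]
      have b1 : (n * s : ℝ) * ‖v 0 * w 0 + v 1 * w 1‖ ≤ (n * s) * Λ :=
        mul_le_mul_of_nonneg_left hℓ.le (by positivity)
      have b2 : (n + 1 : ℝ) * ‖eval v (auxL H)‖ ≤ (n + 1) * (Λ * s) :=
        mul_le_mul_of_nonneg_left hray (by positivity)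
      linarith
    rw [auxLine_eval]
    refine (aux_coeff_bound M hM _ _ hbeta).trans ?_
    rw [mul_pow]
    refine mul_le_mul_of_nonneg_right ?_ (by positivity)
    have hm0 : 0 ≤ min ε 1 := by positivity
    calc min ε 1 ^ M.natDegree ≤ min ε 1 ^ 1 := pow_le_pow_of_le_one hm0 (min_le_right _ _) hd1
      _ ≤ ε := by rw [pow_one]; exact min_le_left _ _


/-- Lemma: a unique critical point at the origin forces
homogeneity.  A bivariate polynomial of degree `n+1` regular at infinity,
vanishing at the origin and having the origin as its unique complex critical
point, is homogeneous: it coincides with its principal homogeneous part. -/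
theorem stmt12 (n : ℕ) (hn : 1 ≤ n) (H : MvPolynomial (Fin 2) ℂ)
    (hdeg : H.totalDegree = n + 1) (hreg : RegularAtInfinity n H)
    (h0 : eval ![0, 0] H = 0)
    (hcrit0 : eval ![(0 : ℂ), 0] (pderiv 0 H) = 0 ∧ eval ![(0 : ℂ), 0] (pderiv 1 H) = 0)
    (honly : ∀ x₀ y₀ : ℂ, eval ![x₀, y₀] (pderiv 0 H) = 0 →
      eval ![x₀, y₀] (pderiv 1 H) = 0 → x₀ = 0 ∧ y₀ = 0) :
    H = homogeneousComponent (n + 1) H := by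
  have hvec : ∀ v : Fin 2 → ℂ, ![v 0, v 1] = v := by
    intro v; funext i; fin_cases i <;> rfl
  have h00 : ![(0 : ℂ), 0] = 0 := by
    funext i; fin_cases i <;> rfl
  have hlow : (H - homogeneousComponent (n + 1) H).totalDegree ≤ n := by
    rw [aux_td]
    intro m hm
    rw [coeff_sub, coeff_homogeneousComponent, aux_degree] at hm
    have hle : m 0 + m 1 ≤ n + 1 := by
      refine (aux_td H (n + 1)).1 hdeg.le m fun h => hm ?_
      rw [h]; simp
    by_contra hcon
    have : m 0 + m 1 = n + 1 := by omega
    rw [if_pos this, sub_self] at hm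
    exact hm rfl
  have hlow' : ∀ i, (pderiv i H - pderiv i (homogeneousComponent (n + 1) H)).totalDegree + 1
      ≤ n := by
    intro i
    rw [← map_sub]
    have := aux_tdeg_pderiv (p := H - homogeneousComponent (n + 1) H) (d := n - 1) i (by omega)
    omega
  have hhom : ∀ i, (pderiv i (homogeneousComponent (n + 1) H)).IsHomogeneous n := fun i => by
    have := (homogeneousComponent_isHomogeneous (n + 1) H).pderiv (i := i)
    simpa using this
  have hz : ∀ v : Fin 2 → ℂ, eval v (pderiv 0 (homogeneousComponent (n + 1) H)) = 0 →
      eval v (pderiv 1 (homogeneousComponent (n + 1) H)) = 0 → v = 0 := by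
    intro v h1 h2
    rw [← hvec v] at h1 h2
    have h3 := hreg (v 0) (v 1) h1 h2
    rw [← hvec v, h3.1, h3.2, h00]
  have hpow := aux_pow n (pderiv 0 H) (pderiv 1 H) (pderiv 0 (homogeneousComponent (n + 1) H))
    (pderiv 1 (homogeneousComponent (n + 1) H)) (hhom 0) (hhom 1) (hlow' 0) (hlow' 1) hz
  obtain ⟨N0, hN0⟩ := hpow 0
  obtain ⟨N1, hN1⟩ := hpow 1
  apply aux_E_zero
  refine aux_main n hn H hdeg.le (max N0 N1) (fun i => ?_) (fun v hv => ?_) ?_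
  · fin_cases i
    · exact hN0 _ (le_max_left _ _)
    · exact hN1 _ (le_max_right _ _)
  · have := honly (v 0) (v 1) (by rw [hvec v]; exact congrFun hv 0) (by rw [hvec v]; exact congrFun hv 1)
    rw [← hvec v, this.1, this.2, h00]
  · rw [h00] at h0
    simp only [auxL, map_sub, map_add, map_mul, eval_X, h0, Pi.zero_apply]
    ring
end
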